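/- arXiv:1703.07964 — 2 statements merged into one kernel-verified Lean document; each statement's English description precedes it below -/
import Mathlib

section
/- Let G1 be a simple bidirected graph with nonnegative edge weights and let v be a node of G1 with exactly d neighbors u1,…,ud, where d ≥ 4. Let G2 be the graph obtained from G1 by the operation Split(v). Then G2 is a simple bidirected graph, G1 has a non-degenerate cycle if and only if G2 does, and in that case the minimum weight of a non-degenerate cycle of G1 equals the minimum weight of a non-degenerate cycle of G2. -/
open scoped ENNReal

/-- A simple directed graph on node type `V`, with nonnegative (extended-real)
edge weights: there are no self-loops, and between any ordered pair of nodes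
there is at most one edge (so no parallel edges). -/
structure WDigraph (V : Type) where
  Edge : V → V → Prop
  w : V → V → ℝ≥0∞
  irrefl : ∀ v, ¬ Edge v v

namespace WDigraph

variable {V : Type}

/-- The consecutive steps (directed edges) of a walk given as its list of nodes. -/
def steps (l : List V) : List (V × V) := l.zip l.tail

/-- `l` is a walk of `G` (nodes may repeat). -/
def IsWalk (G : WDigraph V) (l : List V) : Prop := l ≠ [] ∧ l.Chain' G.Edge

/-- `l` is an `s`-`t`-path of `G` (nodes may repeat). -/
def IsPath (G : WDigraph V) (s t : V) (l : List V) : Prop :=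
  G.IsWalk l ∧ l.head? = some s ∧ l.getLast? = some t

/-- The weight of a walk: the sum of the weights of its edges. -/
noncomputable def wWalk (G : WDigraph V) (l : List V) : ℝ≥0∞ :=
  ((steps l).map fun e => G.w e.1 e.2).sum

/-- A cycle of `G` is an `s`-`s`-path for some node `s`. -/
def IsCycle (G : WDigraph V) (l : List V) : Prop := ∃ s, G.IsPath s s l

/-- The walk `l` traverses the directed edge `(s,t)`. -/
def Traverses (l : List V) (s t : V) : Prop := (s, t) ∈ steps l

/-- A cycle is degenerate if it is a single node or traverses both `st` and `ts`. -/
def Degenerate (l : List V) : Prop :=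
  l.length = 1 ∨ ∃ s t, Traverses l s t ∧ Traverses l t s

/-- A simple cycle passes each node at most once. -/
def IsSimpleCycle (G : WDigraph V) (l : List V) : Prop :=
  G.IsCycle l ∧ l.dropLast.Nodup

/-- `G` is bidirected: `st` is an edge iff `ts` is an edge. -/
def Bidirected (G : WDigraph V) : Prop := ∀ u v, G.Edge u v → G.Edge v u

/-- `d_G(u,v)`: the minimum weight of a `u`-`v`-path, `∞` if there is none. -/
noncomputable def dist (G : WDigraph V) (s t : V) : ℝ≥0∞ :=
  sInf {x | ∃ l, G.IsPath s t l ∧ G.wWalk l = x}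

end WDigraph

/-- A plane embedding of the (bidirected) graph with adjacency `A` on node
type `V`: nodes are drawn as distinct points, each bundled pair of oppositely
directed edges is drawn as a single simple arc joining its endpoints, and two
arcs meet only at common endpoints and avoid all other nodes. -/
structure PlaneEmbedding {V : Type} (A : V → V → Prop) where
  pos : V → ℝ × ℝ
  arc : V → V → ℝ → ℝ × ℝ
  pos_inj : Function.Injective pos
  arc_cont : ∀ u v, A u v → ContinuousOn (arc u v) (Set.Icc 0 1)
  arc_start : ∀ u v, A u v → arc u v 0 = pos u
  arc_end : ∀ u v, A u v → arc u v 1 = pos v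
  arc_inj : ∀ u v, A u v → Set.InjOn (arc u v) (Set.Icc 0 1)
  arc_symm : ∀ u v, A u v → ∀ t, arc v u t = arc u v (1 - t)
  arc_avoid : ∀ u v, A u v → ∀ x : V, pos x ∈ arc u v '' Set.Icc 0 1 → x = u ∨ x = v
  arc_meet : ∀ u v x y, A u v → A x y → ({u, v} : Set V) ≠ {x, y} →
    arc u v '' Set.Icc 0 1 ∩ arc x y '' Set.Icc 0 1 ⊆ ({pos u, pos v} : Set (ℝ × ℝ)) ∩ {pos x, pos y}

/-- The drawing (point set in the plane) of a set of directed edges. -/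
def PlaneEmbedding.drawing {V : Type} {A : V → V → Prop} (emb : PlaneEmbedding A)
    (E : Set (V × V)) : Set (ℝ × ℝ) :=
  ⋃ e ∈ E, emb.arc e.1 e.2 '' Set.Icc 0 1

/-- The drawing of the whole graph. -/
def PlaneEmbedding.fullDrawing {V : Type} {A : V → V → Prop} (emb : PlaneEmbedding A) :
    Set (ℝ × ℝ) :=
  emb.drawing {e | A e.1 e.2}

/-- A face of the embedded graph: a connected component of the complement of
the drawing. -/
def PlaneEmbedding.IsFace {V : Type} {A : V → V → Prop} (emb : PlaneEmbedding A)
    (F : Set (ℝ × ℝ)) : Prop :=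
  ∃ x, x ∉ emb.fullDrawing ∧ F = connectedComponentIn (emb.fullDrawing)ᶜ x

namespace SplitAux
open WDigraph

variable {α β : Type}

theorem steps_cc (x y : α) (m : List α) : steps (x :: y :: m) = (x, y) :: steps (y :: m) := rfl

theorem steps_one (x : α) : steps [x] = [] := rfl

theorem steps_app (a : List α) (x : α) (b : List α) :
    steps (a ++ x :: b) = steps (a ++ [x]) ++ steps (x :: b) := by
  induction a with
  | nil => simp [steps_one]
  | cons y a ih =>
    cases a with
    | nil => simp [steps_cc, steps_one]
    | cons z a => simpa [steps_cc] using ih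

theorem steps_map (f : α → β) (l : List α) :
    steps (l.map f) = (steps l).map (Prod.map f f) := by
  induction l with
  | nil => rfl
  | cons y a ih =>
    cases a with
    | nil => rfl
    | cons z a => simpa [steps_cc] using ih

theorem chain_iff (R : α → α → Prop) (l : List α) :
    l.Chain' R ↔ ∀ e ∈ steps l, R e.1 e.2 := by
  induction l with
  | nil => simp [steps, List.Chain']
  | cons y a ih =>
    cases a with
    | nil => simp [steps_one, List.Chain']
    | cons z a => simp only [steps_cc, List.forall_mem_cons, ← ih]; simp [List.Chain']

/-- normal form of nondegenerate cycles -/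
def ND (G : WDigraph α) (s : α) (m : List α) : Prop :=
  (s :: m).getLast? = some s ∧ m ≠ [] ∧ (∀ e ∈ steps (s :: m), G.Edge e.1 e.2) ∧
    ∀ x y, (x, y) ∈ steps (s :: m) → (y, x) ∉ steps (s :: m)

theorem nd_iff (G : WDigraph α) (l : List α) :
    (G.IsCycle l ∧ ¬ Degenerate l) ↔ ∃ s m, l = s :: m ∧ ND G s m := by
  unfold IsCycle IsPath IsWalk Degenerate Traverses ND
  simp only [chain_iff]
  constructor
  · rintro ⟨⟨s, ⟨h1, h2⟩, h3, h4⟩, h5⟩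
    cases l with
    | nil => simp at h1
    | cons x m =>
      simp at h3
      subst h3
      push Not at h5
      refine ⟨x, m, rfl, h4, ?_, h2, h5.2⟩
      rintro rfl
      simp at h5
  · rintro ⟨s, m, rfl, h1, h2, h3, h4⟩
    refine ⟨⟨s, ⟨by simp, h3⟩, by simp, h1⟩, ?_⟩
    push Not
    exact ⟨by simpa using h2, h4⟩

theorem rot (s v : α) (m : List α) (hm : m ≠ []) (hl : (s :: m).getLast? = some s)
    (hv : v ∈ s :: m) :
    ∃ c r, v ∉ c ∧ (steps (v :: c ++ [v]) ++ r).Perm (steps (s :: m)) := by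
  classical
  have key : ∀ b : List α, v ∈ b → ∃ c r, v ∉ c ∧ steps (v :: c ++ [v]) ++ r = steps (v :: b) := by
    intro b hb
    obtain ⟨c, b', rfl, hc⟩ := List.eq_append_cons_of_mem hb
    exact ⟨c, steps (v :: b'), hc, (steps_app (v :: c) v b').symm⟩
  obtain ⟨m', x, rfl⟩ := List.eq_nil_or_concat m |>.resolve_left hm
  simp only [List.concat_eq_append] at *
  have hx : x = s := by
    rw [← List.cons_append, List.getLast?_append] at hl
    simpa using hl
  subst hx
  by_cases hxv : v = x
  · subst hxv
    obtain ⟨c, r, hc, h⟩ := key (m' ++ [v]) (by simp)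
    exact ⟨c, r, hc, by rw [h]⟩
  · have hv' : v ∈ m' := by simpa [hxv] using hv
    obtain ⟨a, b, rfl, -⟩ := List.eq_append_cons_of_mem hv'
    obtain ⟨c, r, hc, h⟩ := key (b ++ x :: a ++ [v]) (by simp)
    refine ⟨c, r, hc, ?_⟩
    rw [h]
    have e1 : steps (v :: (b ++ x :: a ++ [v])) = steps (v :: b ++ [x]) ++ steps (x :: a ++ [v]) := by
      have := steps_app (v :: b) x (a ++ [v]); simpa using this
    have e2 : steps (x :: (a ++ v :: b ++ [x])) = steps (x :: a ++ [v]) ++ steps (v :: b ++ [x]) := by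
      have := steps_app (x :: a) v (b ++ [x]); simpa using this
    rw [e1, e2]
    exact List.perm_append_comm

theorem mono (f : α → ℤ) (P : α → Prop) (hf : ∀ x y, P x → P y → f x = f y → x = y)
    (r : List α) : ∀ (i j : α), (∀ e ∈ steps (i :: j :: r), P e.1 ∧ P e.2 ∧
      (f e.2 = f e.1 + 1 ∨ f e.2 = f e.1 - 1)) →
    (∀ x y, (x, y) ∈ steps (i :: j :: r) → (y, x) ∉ steps (i :: j :: r)) → f j = f i + 1 →
    ∀ t, (i :: j :: r).getLast? = some t → f i < f t := by
  induction r with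
  | nil => intro i j _ _ h t ht; simp at ht; subst ht; omega
  | cons k r ih =>
    intro i j h1 h2 h t ht
    simp only [steps_cc, List.forall_mem_cons] at h1
    obtain ⟨⟨pi, pj, _⟩, ⟨_, pk, hjk⟩, h3⟩ := h1
    have hk : f k = f j + 1 := by
      rcases hjk with h' | h'
      · exact h'
      · have : k = i := hf _ _ pk pi (by omega)
        subst this
        exact absurd (by simp [steps_cc]) (h2 k j (by simp [steps_cc]))
    have := ih j k (by simp only [steps_cc, List.forall_mem_cons]; exact ⟨⟨pj, pk, hjk⟩, h3⟩)
      (fun x y hx hy => h2 x y (by rw [steps_cc]; exact List.mem_cons_of_mem _ hx)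
        (by rw [steps_cc]; exact List.mem_cons_of_mem _ hy)) hk t
      (by simpa using ht)
    omega

theorem noLine (f : α → ℤ) (P : α → Prop) (hf : ∀ x y, P x → P y → f x = f y → x = y)
    (s : α) (m : List α) (hm : m ≠ []) (hl : (s :: m).getLast? = some s)
    (h1 : ∀ e ∈ steps (s :: m), P e.1 ∧ P e.2 ∧ (f e.2 = f e.1 + 1 ∨ f e.2 = f e.1 - 1))
    (h2 : ∀ x y, (x, y) ∈ steps (s :: m) → (y, x) ∉ steps (s :: m)) : False := by
  cases m with
  | nil => exact hm rfl
  | cons j r =>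
    rcases (h1 (s, j) (by simp [steps_cc])).2.2 with h | h
    · exact lt_irrefl _ (mono f P hf r s j h1 h2 h s hl)
    · refine lt_irrefl _ (mono (fun x => - f x) P (fun x y a b c => hf x y a b (by simpa using c))
        r s j (fun e he => ?_) h2 (by simp only at *; omega) s hl)
      obtain ⟨a, b, c⟩ := h1 e he
      exact ⟨a, b, by omega⟩

theorem pathExists (d : ℕ) : ∀ (n : ℕ) (i j : Fin d), (i : ℕ) + n = j → 
    (∃ l : List (Fin d), (i :: l).getLast? = some j ∧ ∀ e ∈ steps (i :: l), (e.1 : ℕ) + 1 = e.2) ∧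
    (∃ l : List (Fin d), (j :: l).getLast? = some i ∧ ∀ e ∈ steps (j :: l), (e.2 : ℕ) + 1 = e.1) := by
  intro n
  induction n with
  | zero =>
    intro i j h
    have : i = j := Fin.ext (by simpa using h)
    subst this
    exact ⟨⟨[], by simp [steps_one]⟩, ⟨[], by simp [steps_one]⟩⟩
  | succ n ih =>
    intro i j h
    have hj := j.2
    obtain ⟨l, h1, h2⟩ := (ih ⟨i + 1, by omega⟩ j (by simp; omega)).1
    obtain ⟨l', h1', h2'⟩ := (ih i ⟨j - 1, by omega⟩ (by simp; omega)).2
    refine ⟨⟨_ :: l, by simpa using h1, ?_⟩, ⟨_ :: l', by simpa using h1', ?_⟩⟩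
    · rw [steps_cc, List.forall_mem_cons]; exact ⟨by simp, h2⟩
    · rw [steps_cc, List.forall_mem_cons]; exact ⟨by simp; omega, h2'⟩

theorem path (d : ℕ) (i j : Fin d) : ∃ l : List (Fin d), (i :: l).getLast? = some j ∧
    ((∀ e ∈ steps (i :: l), (e.1 : ℕ) + 1 = e.2) ∨ (∀ e ∈ steps (i :: l), (e.2 : ℕ) + 1 = e.1)) := by
  rcases le_total (i : ℕ) j with h | h
  · obtain ⟨l, h1, h2⟩ := (pathExists d (j - i) i j (by omega)).1
    exact ⟨l, h1, Or.inl h2⟩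
  · obtain ⟨l, h1, h2⟩ := (pathExists d (i - j) j i (by omega)).2
    exact ⟨l, h1, Or.inr h2⟩

theorem steps_mid (x y p q : α) (c P : List α) (hp : c.head? = some p)
    (hq : c.getLast? = some q) :
    steps (x :: (c ++ y :: P)) = (x, p) :: (steps c ++ (q, y) :: steps (y :: P)) := by
  have h1 : steps (c ++ y :: P) = steps c ++ (q, y) :: steps (y :: P) := by
    obtain ⟨c1, rfl⟩ := List.getLast?_eq_some_iff.1 hq
    have := steps_app c1 q (y :: P)
    simpa [steps_cc] using this
  rw [← h1]
  cases c with
  | nil => simp at hp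
  | cons a c => simp at hp; subst hp; rfl

section
variable {V : Type} (G1 : WDigraph V) (hbi : G1.Bidirected)
    (v : V) (d : ℕ) (u : Fin d → V) (hu : Function.Injective u)
    (hnb : ∀ x : V, G1.Edge v x ↔ ∃ i, x = u i)
    (G2 : WDigraph ({x : V // x ≠ v} ⊕ Fin d))
    (h11 : ∀ x y : {x : V // x ≠ v},
      (G2.Edge (Sum.inl x) (Sum.inl y) ↔ G1.Edge (x : V) (y : V)) ∧
      G2.w (Sum.inl x) (Sum.inl y) = G1.w (x : V) (y : V))
    (h22 : ∀ i j : Fin d,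
      (G2.Edge (Sum.inr i) (Sum.inr j) ↔ ((i : ℕ) + 1 = (j : ℕ) ∨ (j : ℕ) + 1 = (i : ℕ))) ∧
      G2.w (Sum.inr i) (Sum.inr j) = 0)
    (h12 : ∀ (x : {x : V // x ≠ v}) (i : Fin d),
      (G2.Edge (Sum.inl x) (Sum.inr i) ↔ ((x : V) = u i ∧ G1.Edge (x : V) v)) ∧
      (G2.Edge (Sum.inr i) (Sum.inl x) ↔ ((x : V) = u i ∧ G1.Edge v (x : V))) ∧
      ((x : V) = u i →
        G2.w (Sum.inl x) (Sum.inr i) = G1.w (x : V) v ∧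
        G2.w (Sum.inr i) (Sum.inl x) = G1.w v (x : V)))

include hbi h11 h22 h12 in
theorem bidir : G2.Bidirected := by
  rintro (x | i) (y | j) h
  · rw [(h11 _ _).1] at h ⊢; exact hbi _ _ h
  · rw [(h12 _ _).1] at h; rw [(h12 _ _).2.1]; exact ⟨h.1, hbi _ _ h.2⟩
  · rw [(h12 _ _).2.1] at h; rw [(h12 _ _).1]; exact ⟨h.1, hbi _ _ h.2⟩
  · rw [(h22 _ _).1] at h ⊢; exact h.symm

include hbi hnb h11 h22 h12 in
theorem fwd (s : V) (m : List V) (h : ND G1 s m) :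
    ∃ s' m', ND G2 s' m' ∧ G2.wWalk (s' :: m') ≤ G1.wWalk (s :: m) := by
  obtain ⟨h1, h2, h3, h4⟩ := h
  have lift : ∀ l : List V, v ∉ l → ∃ l' : List {x : V // x ≠ v}, l'.map Subtype.val = l := by
    intro l hl
    exact ⟨l.attach.map fun x => ⟨x.1, fun h => hl (h ▸ x.2)⟩, by simp⟩
  by_cases hv : v ∈ s :: m
  · obtain ⟨c, r, hc, hp⟩ := rot s v m h2 h1 hv
    obtain ⟨c', rfl⟩ := lift c hc
    have hmem : ∀ e ∈ steps (v :: c'.map Subtype.val ++ [v]), e ∈ steps (s :: m) :=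
      fun e he => hp.subset (List.mem_append_left _ he)
    have hc0 : c' ≠ [] := by
      rintro rfl
      exact G1.irrefl v (h3 (v, v) (hmem _ (by simp [steps_cc])))
    obtain ⟨p, hp'⟩ : ∃ p, c'.head? = some p := ⟨_, List.head?_eq_some_head hc0⟩
    obtain ⟨q, hq'⟩ : ∃ p, c'.getLast? = some p := ⟨_, List.getLast?_eq_some_getLast hc0⟩
    have hst := steps_mid v v p.1 q.1 (c'.map Subtype.val) []
      (by rw [List.head?_map, hp']; rfl) (by rw [List.getLast?_map, hq']; rfl)
    rw [List.cons_append] at hmem hp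
    rw [hst, steps_map] at hmem hp
    simp only [steps_one] at hmem hp
    have e1 : G1.Edge v p := h3 _ (hmem (v, p.1) (by simp))
    have e2 : G1.Edge q v := h3 _ (hmem (q.1, v) (by simp))
    have ec : ∀ x y, (x, y) ∈ steps c' → G1.Edge x y := fun x y hxy =>
      h3 _ (hmem (x.1, y.1) (by
        refine List.mem_cons_of_mem _ (List.mem_append_left _ ?_)
        exact List.mem_map_of_mem (f := Prod.map Subtype.val Subtype.val) hxy))
    have ec' : ∀ x y, (x, y) ∈ steps c' → (y, x) ∉ steps c' := fun x y hxy hyx =>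
      h4 x.1 y.1 (hmem (x.1, y.1) (by
        refine List.mem_cons_of_mem _ (List.mem_append_left _ ?_)
        exact List.mem_map_of_mem (f := Prod.map Subtype.val Subtype.val) hxy))
        (hmem (y.1, x.1) (by
        refine List.mem_cons_of_mem _ (List.mem_append_left _ ?_)
        exact List.mem_map_of_mem (f := Prod.map Subtype.val Subtype.val) hyx))
    have hpq : p.1 ≠ q.1 := by
      intro h
      exact h4 v p.1 (hmem _ (by simp)) (hmem _ (by simp [h]))
    obtain ⟨i, hi⟩ := (hnb _).1 e1
    obtain ⟨j, hj⟩ := (hnb _).1 (hbi _ _ e2)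
    have hij : i ≠ j := by rintro rfl; exact hpq (hi.trans hj.symm)
    obtain ⟨P, hP1, hP2⟩ := path d j i
    have hst2 := steps_mid (Sum.inr i) (Sum.inr j) (Sum.inl p) (Sum.inl q)
      (c'.map Sum.inl) (P.map (Sum.inr : Fin d → {x : V // x ≠ v} ⊕ Fin d))
      (by simp [hp']) (by simp [hq'])
    rw [← List.map_cons (f := Sum.inr), steps_map, steps_map] at hst2
    have hP3 : ∀ e ∈ steps (j :: P), (e.1 : ℕ) + 1 = e.2 ∨ (e.2 : ℕ) + 1 = e.1 := by
      intro e he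
      rcases hP2 with h | h
      · exact Or.inl (h e he)
      · exact Or.inr (h e he)
    refine ⟨Sum.inr i, c'.map Sum.inl ++ (j :: P).map Sum.inr, ⟨?_, by simp, ?_, ?_⟩, ?_⟩
    · rw [← List.cons_append, List.getLast?_append, List.getLast?_map, hP1]
      simp
    · rw [hst2]
      intro e he
      simp only [List.mem_cons, List.mem_append, List.mem_map] at he
      rcases he with rfl | ⟨⟨x, y⟩, hxy, rfl⟩ | rfl | ⟨⟨x, y⟩, hxy, rfl⟩
      · exact (h12 _ _).2.1.2 ⟨hi, e1⟩
      · exact (h11 _ _).1.2 (ec _ _ hxy)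
      · exact (h12 _ _).1.2 ⟨hj, e2⟩
      · exact (h22 _ _).1.2 (hP3 _ hxy)
    · rw [hst2]
      intro x y hx hy
      simp only [List.mem_cons, List.mem_append, List.mem_map, Prod.exists, Prod.map,
        Prod.mk.injEq] at hx hy
      rcases hx with ⟨rfl, rfl⟩ | ⟨a, b, hab, rfl, rfl⟩ | ⟨rfl, rfl⟩ | ⟨a, b, hab, rfl, rfl⟩ <;>
      simp only [reduceCtorEq, Sum.inl.injEq, Sum.inr.injEq, false_and, and_false, exists_false,
        or_false, false_or, exists_eq_right_right, exists_eq_right] at hy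
      · exact hij hy.2
      · exact ec' _ _ hab hy
      · exact hij hy.1.symm
      · rcases hP2 with h | h
        · have := h _ hab; have := h _ hy; simp only at *; omega
        · have := h _ hab; have := h _ hy; simp only at *; omega
    · unfold wWalk
      rw [hst2, ← (hp.map _).sum_eq]
      simp only [List.map_cons, List.map_append, List.sum_append, List.sum_cons, List.map_map,
        List.map_nil, List.sum_nil]
      have z : ((steps (j :: P)).map ((fun e : _ × _ => G2.w e.1 e.2) ∘
          Prod.map Sum.inr Sum.inr)).sum = 0 := by
        apply List.sum_eq_zero
        intro x hx
        obtain ⟨e, -, rfl⟩ := List.mem_map.1 hx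
        exact (h22 _ _).2
      have z2 : ((fun e : _ × _ => G2.w e.1 e.2) ∘ Prod.map Sum.inl Sum.inl) =
          ((fun e : V × V => G1.w e.1 e.2) ∘ Prod.map Subtype.val Subtype.val) := by
        funext e
        exact (h11 _ _).2
      rw [z, z2, ((h12 _ _).2.2 hi).2, ((h12 _ _).2.2 hj).1]
      exact le_self_add
  · obtain ⟨l', hl'⟩ := lift _ hv
    cases l' with
    | nil => simp at hl'
    | cons s' m' =>
      simp only [List.map_cons, List.cons.injEq] at hl'
      obtain ⟨rfl, rfl⟩ := hl'
      rw [← List.map_cons (f := Subtype.val)] at h1 h3 h4 ⊢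
      rw [steps_map] at h3 h4
      refine ⟨Sum.inl s', m'.map Sum.inl, ⟨?_, fun h => h2 (by rw [List.map_eq_nil_iff] at h ⊢; exact h), ?_, ?_⟩, ?_⟩
      · rw [← List.map_cons (f := Sum.inl)]
        rw [List.getLast?_map, Option.map_eq_some_iff] at h1 ⊢
        obtain ⟨a, ha, hb⟩ := h1
        exact ⟨a, ha, congrArg _ (Subtype.ext hb)⟩
      · rw [← List.map_cons (f := Sum.inl), steps_map]
        intro e he
        obtain ⟨e, he', rfl⟩ := List.mem_map.1 he
        exact (h11 _ _).1.2 (h3 _ (List.mem_map_of_mem he'))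
      · rw [← List.map_cons (f := Sum.inl), steps_map]
        intro x y hx hy
        simp only [List.mem_map, Prod.exists, Prod.map, Prod.mk.injEq] at hx hy
        obtain ⟨a, b, hab, rfl, rfl⟩ := hx
        simp only [Sum.inl.injEq, exists_eq_right_right, exists_eq_right] at hy
        exact h4 a.1 b.1 (List.mem_map_of_mem (f := Prod.map Subtype.val Subtype.val) hab)
          (List.mem_map_of_mem (f := Prod.map Subtype.val Subtype.val) hy)
      · unfold wWalk
        rw [← List.map_cons (f := Sum.inl), steps_map, steps_map, List.map_map, List.map_map]
        refine le_of_eq (congrArg _ (List.map_congr_left fun e _ => ?_))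
        exact (h11 _ _).2

/-- projection -/
def pr : {x : V // x ≠ v} ⊕ Fin d → V
  | Sum.inl x => x.1
  | Sum.inr _ => v

include h11 h12 in
theorem pr_edge (x y : {x : V // x ≠ v} ⊕ Fin d) (h : G2.Edge x y)
    (hxy : ¬ (x.isRight ∧ y.isRight)) :
    G1.Edge (pr v d x) (pr v d y) ∧ G2.w x y = G1.w (pr v d x) (pr v d y) := by
  rcases x with x | i <;> rcases y with y | j
  · exact ⟨(h11 _ _).1.1 h, (h11 _ _).2⟩
  · have := (h12 _ _).1.1 h
    exact ⟨this.2, ((h12 _ _).2.2 this.1).1⟩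
  · have := (h12 _ _).2.1.1 h
    exact ⟨this.2, ((h12 _ _).2.2 this.1).2⟩
  · simp at hxy

include h11 h12 h22 in
theorem proj (m : List ({x : V // x ≠ v} ⊕ Fin d)) : ∀ s,
    (∀ e ∈ steps (s :: m), G2.Edge e.1 e.2) →
    ∃ m1, (pr v d s :: m1).getLast? = (s :: m).getLast?.map (pr v d) ∧
      G1.wWalk (pr v d s :: m1) = G2.wWalk (s :: m) ∧
      (∀ e ∈ steps (pr v d s :: m1), ∃ e' ∈ steps (s :: m), ¬ (e'.1.isRight ∧ e'.2.isRight) ∧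
        e = (pr v d e'.1, pr v d e'.2)) ∧
      (m1 = [] → ∀ e ∈ steps (s :: m), e.1.isRight ∧ e.2.isRight) := by
  induction m with
  | nil => intro s _; exact ⟨[], by simp [steps_one, wWalk]⟩
  | cons t m ih =>
    intro s h
    rw [steps_cc, List.forall_mem_cons] at h
    obtain ⟨m1, a1, a2, a3, a4⟩ := ih t h.2
    by_cases hst : s.isRight ∧ t.isRight
    · have hs : pr v d s = pr v d t := by
        rcases s with s | s <;> rcases t with t | t <;> simp at hst <;> rfl
      have hw : G2.w s t = 0 := by
        rcases s with s | s <;> rcases t with t | t <;> simp at hst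
        exact (h22 _ _).2
      refine ⟨m1, ?_, ?_, ?_, ?_⟩
      · rw [hs, a1, List.getLast?_cons_cons]
      · rw [hs, a2]; simp [wWalk, steps_cc, hw]
      · rw [hs]
        intro e he
        obtain ⟨e', h1, h2⟩ := a3 e he
        exact ⟨e', List.mem_cons_of_mem _ h1, h2⟩
      · intro h0
        rw [steps_cc, List.forall_mem_cons]
        exact ⟨hst, a4 h0⟩
    · have he := pr_edge G1 v d u G2 h11 h12 s t h.1 hst
      refine ⟨pr v d t :: m1, ?_, ?_, ?_, by simp⟩
      · rw [List.getLast?_cons_cons, a1, List.getLast?_cons_cons]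
      · simp only [wWalk, steps_cc, List.map_cons, List.sum_cons] at a2 ⊢
        rw [a2, he.2]
      · rw [steps_cc, List.forall_mem_cons]
        refine ⟨⟨(s, t), by simp [steps_cc], hst, rfl⟩, ?_⟩
        intro e he
        obtain ⟨e', h1, h2⟩ := a3 e he
        exact ⟨e', List.mem_cons_of_mem _ h1, h2⟩

include hu h11 h12 h22 in
theorem bwd (s) (m : List ({x : V // x ≠ v} ⊕ Fin d)) (h : ND G2 s m) :
    ∃ s' m', ND G1 s' m' ∧ G1.wWalk (s' :: m') ≤ G2.wWalk (s :: m) := by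
  obtain ⟨h1, h2, h3, h4⟩ := h
  obtain ⟨m1, a1, a2, a3, a4⟩ := proj G1 v d u G2 h11 h22 h12 m s h3
  refine ⟨pr v d s, m1, ⟨?_, ?_, ?_, ?_⟩, a2.le⟩
  · rw [a1, h1]; rfl
  · intro h0
    refine noLine (Sum.elim (fun _ => (0 : ℤ)) (fun i : Fin d => ((i : ℕ) : ℤ))) (fun x => x.isRight = true)
      ?_ s m h2 h1 ?_ h4
    · rintro (x | i) (y | j) hx hy h <;> simp at hx hy h
      exact congrArg _ (Fin.ext h)
    · intro e he
      obtain ⟨b1, b2⟩ := a4 h0 e he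
      refine ⟨b1, b2, ?_⟩
      have := h3 e he
      rcases e with ⟨x | i, y | j⟩ <;> simp at b1 b2
      have := (h22 _ _).1.1 this
      simp
      omega
  · intro e he
    obtain ⟨e', b1, b2, rfl⟩ := a3 e he
    exact (pr_edge G1 v d u G2 h11 h12 _ _ (h3 _ b1) b2).1
  · intro x y hx hy
    obtain ⟨⟨a, b⟩, b1, b2, b3⟩ := a3 _ hx
    obtain ⟨⟨a', b'⟩, c1, c2, c3⟩ := a3 _ hy
    simp only [Prod.mk.injEq] at b3 c3
    obtain ⟨rfl, rfl⟩ := b3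
    obtain ⟨k1, k2⟩ := c3
    have E1 := h3 _ b1
    have E2 := h3 _ c1
    suffices a' = b ∧ b' = a by
      obtain ⟨rfl, rfl⟩ := this
      exact h4 _ _ b1 c1
    rcases a with a | i <;> rcases b with b | j <;> rcases a' with a' | i' <;>
      rcases b' with b' | j' <;> simp [pr] at b2 c2 k1 k2
    · exact ⟨congrArg _ (Subtype.ext k1.symm), congrArg _ (Subtype.ext k2.symm)⟩
    all_goals first
      | exact absurd k1 b.2
      | exact absurd k2 a.2
      | exact absurd k1.symm a'.2
      | exact absurd k2.symm b'.2
      | skip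
    · have e1 := ((h12 _ _).1.1 E1).1
      have e2 := ((h12 _ _).2.1.1 E2).1
      exact ⟨congrArg _ (hu (by rw [← e1, ← e2, k2])), congrArg _ (Subtype.ext k2.symm)⟩
    · have e1 := ((h12 _ _).2.1.1 E1).1
      have e2 := ((h12 _ _).1.1 E2).1
      exact ⟨congrArg _ (Subtype.ext k1.symm), congrArg _ (hu (by rw [← e1, ← e2, k1]))⟩
end

theorem final (G : WDigraph α) (G' : WDigraph β)
    (h : ∀ s m, ND G s m → ∃ s' m', ND G' s' m' ∧ G'.wWalk (s' :: m') ≤ G.wWalk (s :: m)) :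
    ((∃ l, G.IsCycle l ∧ ¬ Degenerate l) → (∃ l, G'.IsCycle l ∧ ¬ Degenerate l)) ∧
    sInf {x | ∃ l, G'.IsCycle l ∧ ¬ Degenerate l ∧ G'.wWalk l = x} ≤
      sInf {x | ∃ l, G.IsCycle l ∧ ¬ Degenerate l ∧ G.wWalk l = x} := by
  have key : ∀ l, G.IsCycle l → ¬ Degenerate l →
      ∃ l', (G'.IsCycle l' ∧ ¬ Degenerate l') ∧ G'.wWalk l' ≤ G.wWalk l := by
    intro l h1 h2
    obtain ⟨s, m, rfl, hn⟩ := (nd_iff G l).1 ⟨h1, h2⟩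
    obtain ⟨s', m', h3, h4⟩ := h s m hn
    exact ⟨s' :: m', (nd_iff G' _).2 ⟨s', m', rfl, h3⟩, h4⟩
  constructor
  · rintro ⟨l, h1, h2⟩
    obtain ⟨l', h3, -⟩ := key l h1 h2
    exact ⟨l', h3⟩
  · apply le_sInf
    rintro x ⟨l, h1, h2, rfl⟩
    obtain ⟨l', h3, h4⟩ := key l h1 h2
    refine le_trans (sInf_le ?_) h4
    exact ⟨l', h3.1, h3.2, rfl⟩

end SplitAux


/-- Let `G1` be a simple bidirected graph with nonnegative
edge weights and let `v` be a node of `G1` with exactly `d` neighbors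
`u 0, …, u (d-1)`, where `d ≥ 4`.  Let `G2` be the graph obtained from `G1` by
the operation `Split(v)`: it lives on the nodes of `G1` other than `v`
together with `d` new nodes `v_0, …, v_{d-1}` (modelled by `Fin d`), it joins
consecutive new nodes by zero-weight edges in both directions, it replaces
each edge `u i → v` by `u i → v_i` and each edge `v → u i` by `v_i → u i` of
the same weight, and it deletes `v`.  Then `G2` is a simple bidirected graph
(simplicity being built into `WDigraph`), `G1` has a non-degenerate cycle iff
`G2` does, and in that case the minimum weight of a non-degenerate cycle of
`G1` equals the minimum weight of a non-degenerate cycle of `G2`. -/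
theorem stmt5 {V : Type} (G1 : WDigraph V) (hbi : G1.Bidirected)
    (v : V) (d : ℕ) (hd : 4 ≤ d) (u : Fin d → V) (hu : Function.Injective u)
    (hnb : ∀ x : V, G1.Edge v x ↔ ∃ i, x = u i)
    (G2 : WDigraph ({x : V // x ≠ v} ⊕ Fin d))
    (h11 : ∀ x y : {x : V // x ≠ v},
      (G2.Edge (Sum.inl x) (Sum.inl y) ↔ G1.Edge (x : V) (y : V)) ∧
      G2.w (Sum.inl x) (Sum.inl y) = G1.w (x : V) (y : V))
    (h22 : ∀ i j : Fin d,
      (G2.Edge (Sum.inr i) (Sum.inr j) ↔ ((i : ℕ) + 1 = (j : ℕ) ∨ (j : ℕ) + 1 = (i : ℕ))) ∧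
      G2.w (Sum.inr i) (Sum.inr j) = 0)
    (h12 : ∀ (x : {x : V // x ≠ v}) (i : Fin d),
      (G2.Edge (Sum.inl x) (Sum.inr i) ↔ ((x : V) = u i ∧ G1.Edge (x : V) v)) ∧
      (G2.Edge (Sum.inr i) (Sum.inl x) ↔ ((x : V) = u i ∧ G1.Edge v (x : V))) ∧
      ((x : V) = u i →
        G2.w (Sum.inl x) (Sum.inr i) = G1.w (x : V) v ∧
        G2.w (Sum.inr i) (Sum.inl x) = G1.w v (x : V))) :
    G2.Bidirected ∧
    ((∃ l, G1.IsCycle l ∧ ¬ WDigraph.Degenerate l) ↔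
      (∃ l, G2.IsCycle l ∧ ¬ WDigraph.Degenerate l)) ∧
    ((∃ l, G1.IsCycle l ∧ ¬ WDigraph.Degenerate l) →
      sInf {x | ∃ l, G1.IsCycle l ∧ ¬ WDigraph.Degenerate l ∧ G1.wWalk l = x} =
        sInf {x | ∃ l, G2.IsCycle l ∧ ¬ WDigraph.Degenerate l ∧ G2.wWalk l = x}) := by
  obtain ⟨f1, f2⟩ := SplitAux.final G1 G2 (SplitAux.fwd G1 hbi v d u hnb G2 h11 h22 h12)
  obtain ⟨b1, b2⟩ := SplitAux.final G2 G1 (SplitAux.bwd G1 v d u hu G2 h11 h22 h12)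
  exact ⟨SplitAux.bidir G1 hbi v d u G2 h11 h22 h12, ⟨f1, b1⟩, fun _ => le_antisymm b2 f2⟩
end

section
/- Let G△ be an n-node simple undirected plane triangulation whose faces carry nonnegative weights summing to 1 such that the weight of each face is at most 1/4, and let T be a spanning tree of G△. Then there exists an edge e of G△ not in T such that the total weight of the faces of G△ inside the unique simple cycle of T ∪ {e} is at most 3/4 and the total weight of the faces of G△ outside this cycle is at most 3/4. -/
open scoped BigOperators

/-- A plane embedding of an (undirected) simple graph `G`: nodes are drawn as
distinct points, each edge is drawn as a simple arc joining its endpoints,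
and two arcs meet only at common endpoints and avoid all other nodes. -/
structure UPlaneEmbedding {V : Type} (G : SimpleGraph V) where
  pos : V → ℝ × ℝ
  arc : V → V → ℝ → ℝ × ℝ
  pos_inj : Function.Injective pos
  arc_symm : ∀ u v t, arc v u t = arc u v (1 - t)
  arc_cont : ∀ u v, G.Adj u v → ContinuousOn (arc u v) (Set.Icc 0 1)
  arc_start : ∀ u v, G.Adj u v → arc u v 0 = pos u
  arc_end : ∀ u v, G.Adj u v → arc u v 1 = pos v
  arc_inj : ∀ u v, G.Adj u v → Set.InjOn (arc u v) (Set.Icc 0 1)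
  arc_avoid : ∀ u v, G.Adj u v → ∀ x : V, pos x ∈ arc u v '' Set.Icc 0 1 → x = u ∨ x = v
  arc_meet : ∀ u v x y, G.Adj u v → G.Adj x y → ({u, v} : Set V) ≠ {x, y} →
    arc u v '' Set.Icc 0 1 ∩ arc x y '' Set.Icc 0 1 ⊆
      ({pos u, pos v} : Set (ℝ × ℝ)) ∩ {pos x, pos y}

variable {V : Type}

/-- The drawing (point set in the plane) of a set of undirected edges. -/
def udrawing {G : SimpleGraph V} (emb : UPlaneEmbedding G) (E : Set (Sym2 V)) :
    Set (ℝ × ℝ) :=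
  ⋃ u : V, ⋃ v : V, ⋃ (_ : s(u, v) ∈ E ∧ G.Adj u v), emb.arc u v '' Set.Icc 0 1

/-- The drawing of the whole graph. -/
def ufullDrawing {G : SimpleGraph V} (emb : UPlaneEmbedding G) : Set (ℝ × ℝ) :=
  udrawing emb G.edgeSet

/-- A face of the embedded graph: a connected component of the complement of
its drawing. -/
def IsUFace {G : SimpleGraph V} (emb : UPlaneEmbedding G) (F : Set (ℝ × ℝ)) : Prop :=
  ∃ x, x ∉ ufullDrawing emb ∧ F = connectedComponentIn (ufullDrawing emb)ᶜ x

/-- The node `v` lies on (the boundary of) the face `F`. -/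
def OnFace {G : SimpleGraph V} (emb : UPlaneEmbedding G) (F : Set (ℝ × ℝ)) (v : V) :
    Prop :=
  emb.pos v ∈ closure F

/-- The embedded graph is a plane triangulation: every face is bounded by a
triangle of the graph. -/
def IsTriangulation {G : SimpleGraph V} (emb : UPlaneEmbedding G) : Prop :=
  ∀ F, IsUFace emb F →
    {v : V | OnFace emb F v}.ncard = 3 ∧
    (∀ a b : V, OnFace emb F a → OnFace emb F b → a ≠ b → G.Adj a b) ∧
    frontier F =
      udrawing emb {e | ∃ a b : V, e = s(a, b) ∧ OnFace emb F a ∧ OnFace emb F b ∧ G.Adj a b}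

/-- The face `F` (disjoint from the closed curve `J`) lies inside `J`. -/
def FaceInside (J F : Set (ℝ × ℝ)) : Prop :=
  ∀ x ∈ F, Bornology.IsBounded (connectedComponentIn Jᶜ x)

/-- The face `F` (disjoint from the closed curve `J`) lies outside `J`. -/
def FaceOutside (J F : Set (ℝ × ℝ)) : Prop :=
  ∀ x ∈ F, ¬ Bornology.IsBounded (connectedComponentIn Jᶜ x)

section
open Set Topology Filter

def plK (x : ℝ × ℝ) : ℂ := ⟨x.1, x.2⟩

theorem plK_eq (x : ℝ × ℝ) : plK x = (x.1 : ℂ) + x.2 * Complex.I := by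
  apply Complex.ext <;> simp [plK]

theorem plK_cont : Continuous plK := by
  have : plK = fun x : ℝ × ℝ => (x.1 : ℂ) + x.2 * Complex.I := funext plK_eq
  rw [this]; fun_prop

theorem plK_inj : Function.Injective plK := by
  intro x y h
  have h1 := congrArg Complex.re h
  have h2 := congrArg Complex.im h
  exact Prod.ext h1 h2

def PLog (K : Set (ℝ × ℝ)) (f : ℝ × ℝ → ℂ) : Prop :=
  ∃ g : ℝ × ℝ → ℂ, ContinuousOn g K ∧ ∀ x ∈ K, Complex.exp (g x) = f x

theorem PLog.mono {K L : Set (ℝ × ℝ)} {f} (h : PLog L f) (hKL : K ⊆ L) : PLog K f := by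
  obtain ⟨g, hg, he⟩ := h
  exact ⟨g, hg.mono hKL, fun x hx => he x (hKL hx)⟩

theorem pl_const {X : Type*} [TopologicalSpace X] {S : Set X} (hS : IsPreconnected S) {g : X → ℂ}
    (hg : ContinuousOn g S)
    (h1 : ∀ x ∈ S, ∀ y ∈ S, Complex.exp (g x) = Complex.exp (g y)) {x y : X}
    (hx : x ∈ S) (hy : y ∈ S) : g x = g y := by
  refine hS.induction₂ (fun a b => g a = g b) ?_ ?_ ?_ hx hy
  · intro a ha
    have h2 : ∀ᶠ b in 𝓝[S] a, g b ∈ Metric.ball (g a) 1 :=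
      (hg a ha) (Metric.ball_mem_nhds _ one_pos)
    filter_upwards [h2, self_mem_nhdsWithin] with b hb hbS
    obtain ⟨n, hn⟩ := Complex.exp_eq_exp_iff_exists_int.1 (h1 b hbS a ha)
    rw [Metric.mem_ball, dist_eq_norm, hn] at hb
    by_cases h0 : n = 0
    · simp [hn, h0]
    · exfalso
      have h3 : (1:ℝ) ≤ |(n:ℝ)| := by exact_mod_cast Int.one_le_abs h0
      have : ‖g a + (n:ℂ) * (2 * Real.pi * Complex.I) - g a‖ = |(n:ℝ)| * (2 * Real.pi) := by
        simp [abs_of_pos Real.pi_pos]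
      rw [this] at hb
      nlinarith [Real.pi_gt_three]
  · intro a b c _ _ _ h1 h2; exact h1.trans h2
  · intro a b _ _ h; exact h.symm

theorem pl_lift {X : Type*} [TopologicalSpace X] [LocallyPathConnectedSpace X] [SimplyConnectedSpace X]
    [Nonempty X]
    {f : X → ℂ} (hf : Continuous f) (h0 : ∀ x, f x ≠ 0) :
    ∃ g : X → ℂ, Continuous g ∧ ∀ x, Complex.exp (g x) = f x := by
  have x₀ : X := Classical.arbitrary X
  obtain ⟨F, ⟨-, hF⟩, -⟩ := Complex.isCoveringMapOn_exp.existsUnique_continuousMap_lifts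
    ⟨f, hf⟩ (a₀ := x₀) (e₀ := Complex.log (f x₀)) (Complex.exp_log (h0 x₀)) (fun x => h0 x)
  exact ⟨F, F.continuous, fun x => congrFun hF x⟩

theorem pl_glue {K L : Set (ℝ × ℝ)} (hK : IsClosed K) (hL : IsClosed L) {g h : ℝ × ℝ → ℂ}
    (hg : ContinuousOn g K) (hh : ContinuousOn h L) (hgh : ∀ x ∈ K, x ∈ L → g x = h x) :
    ∃ k : ℝ × ℝ → ℂ, ContinuousOn k (K ∪ L) ∧ (∀ x ∈ K, k x = g x) ∧ ∀ x ∈ L, k x = h x := by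
  classical
  have e1 : ∀ x ∈ K, (if x ∈ K then g x else h x) = g x := fun x hx => by simp [hx]
  have e2 : ∀ x ∈ L, (if x ∈ K then g x else h x) = h x := fun x hx => by
    by_cases hk : x ∈ K
    · simp [hk, hgh x hk hx]
    · simp [hk]
  refine ⟨fun x => if x ∈ K then g x else h x, ?_, e1, e2⟩
  exact (hg.congr e1).union_of_isClosed (hh.congr e2) hK hL

theorem PLog.janis {K L : Set (ℝ × ℝ)} (hK : IsClosed K) (hL : IsClosed L) {f}
    (h1 : PLog K f) (h2 : PLog L f) (hc : IsPreconnected (K ∩ L)) : PLog (K ∪ L) f := by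
  obtain ⟨g, hg, eg⟩ := h1
  obtain ⟨h, hh, eh⟩ := h2
  have : ∃ c : ℂ, Complex.exp c = 1 ∧ ∀ x ∈ K, x ∈ L → g x = h x + c := by
    by_cases hne : (K ∩ L).Nonempty
    · obtain ⟨x0, hx0⟩ := hne
      refine ⟨g x0 - h x0, ?_, ?_⟩
      · rw [Complex.exp_sub, eg _ hx0.1, eh _ hx0.2]
        refine div_self ?_
        rw [← eg _ hx0.1]; exact Complex.exp_ne_zero _
      · intro x hxK hxL
        have := pl_const hc (g := fun x => g x - h x)
          ((hg.mono inter_subset_left).sub (hh.mono inter_subset_right)) (by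
            intro x hx y hy
            simp only [Complex.exp_sub]
            have e1 := eg _ hx.1
            have e2 := eg _ hy.1
            rw [← eh _ hx.2] at e1
            rw [← eh _ hy.2] at e2
            rw [e1, e2, div_self (Complex.exp_ne_zero _), div_self (Complex.exp_ne_zero _)])
          (x := x) (y := x0) ⟨hxK, hxL⟩ hx0
        rw [← this]; ring
    · exact ⟨0, by simp, fun x hx hx' => absurd ⟨x, hx, hx'⟩ hne⟩
  obtain ⟨c, hc1, hc2⟩ := this
  obtain ⟨k, hk, k1, k2⟩ := pl_glue (h := fun x => h x + c) hK hL hg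
    (hh.add continuousOn_const) hc2
  refine ⟨k, hk, ?_⟩
  rintro x (hx | hx)
  · rw [k1 x hx, eg x hx]
  · rw [k2 x hx, Complex.exp_add, hc1, eh x hx, mul_one]

/-- Same component gives logarithm. -/
theorem PLog.of_same {K : Set (ℝ × ℝ)} (hK : IsCompact K) {p q : ℝ × ℝ} (hp : p ∈ Kᶜ)
    (hq : q ∈ connectedComponentIn Kᶜ p) :
    PLog K (fun z => (plK z - plK p) / (plK z - plK q)) := by
  have hne : ∀ a ∈ Kᶜ, ∀ z ∈ K, plK z - plK a ≠ 0 := by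
    intro a ha z hz h
    exact ha ((plK_inj (sub_eq_zero.1 h)) ▸ hz)
  have hsub := connectedComponentIn_subset Kᶜ p
  refine (isPreconnected_connectedComponentIn (F := Kᶜ) (x := p)).induction₂
    (fun a b => PLog K (fun z => (plK z - plK a) / (plK z - plK b))) ?_ ?_ ?_
    (mem_connectedComponentIn hp) hq
  · intro a ha
    have haK := hsub ha
    rcases K.eq_empty_or_nonempty with rfl | hKn
    · refine Eventually.of_forall fun b => ⟨0, by simp, by simp⟩
    obtain ⟨z0, hz0, hmin⟩ := hK.exists_isMinOn hKn
      (f := fun z => ‖plK z - plK a‖) (by have := plK_cont; fun_prop)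
    have hpos : 0 < ‖plK z0 - plK a‖ := norm_pos_iff.2 (hne a haK z0 hz0)
    have h2 : ∀ᶠ b in 𝓝 a, plK b ∈ Metric.ball (plK a) (‖plK z0 - plK a‖ / 1) :=
      plK_cont.continuousAt (Metric.ball_mem_nhds _ (by positivity))
    filter_upwards [mem_nhdsWithin_of_mem_nhds h2, self_mem_nhdsWithin] with b hb hbS
    have hbK := hsub hbS
    -- (z-b)/(z-a) is within 1 of 1
    have hsl : ∀ z ∈ K, (plK z - plK b) / (plK z - plK a) ∈ Complex.slitPlane := by
      intro z hz
      apply Complex.mem_slitPlane_of_norm_lt_one (z := (plK a - plK b) / (plK z - plK a)) ?_ |> fun h => ?_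
      · rw [norm_div, div_lt_one (norm_pos_iff.2 (hne a haK z hz))]
        have : ‖plK z0 - plK a‖ ≤ ‖plK z - plK a‖ := hmin hz
        rw [Metric.mem_ball, dist_comm, dist_eq_norm, div_one] at hb
        linarith
      · convert h using 1
        have := hne a haK z hz
        field_simp
        ring
    refine ⟨fun z => - Complex.log ((plK z - plK b) / (plK z - plK a)), ?_, ?_⟩
    · refine ContinuousOn.neg (ContinuousOn.clog ?_ hsl)
      have := plK_cont
      exact ContinuousOn.div (by fun_prop) (by fun_prop) (hne a haK)
    · intro z hz
      rw [Complex.exp_neg, Complex.exp_log (div_ne_zero (hne b hbK z hz) (hne a haK z hz)), inv_div]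
  · rintro a b c ha hb hc ⟨g, hg, eg⟩ ⟨h, hh, eh⟩
    refine ⟨fun z => g z + h z, hg.add hh, fun z hz => ?_⟩
    rw [Complex.exp_add, eg z hz, eh z hz, div_mul_div_cancel₀ (hne b (hsub hb) z hz)]
  · rintro a b ha hb ⟨g, hg, eg⟩
    refine ⟨fun z => - g z, hg.neg, fun z hz => ?_⟩
    rw [Complex.exp_neg, eg z hz, inv_div]

theorem pl_frontier_comp {K : Set (ℝ × ℝ)} (hK : IsClosed K) (p : ℝ × ℝ) :
    frontier (connectedComponentIn Kᶜ p) ⊆ K := by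
  intro x hx
  by_contra hxK
  have ho : IsOpen (connectedComponentIn Kᶜ p) := hK.isOpen_compl.connectedComponentIn
  rw [ho.frontier_eq] at hx
  have hxo : connectedComponentIn Kᶜ x ∈ 𝓝 x :=
    connectedComponentIn_mem_nhds (hK.isOpen_compl.mem_nhds hxK)
  obtain ⟨y, hy1, hy2⟩ := mem_closure_iff_nhds.1 hx.1 _ hxo
  have e1 := connectedComponentIn_eq hy1
  have e2 := connectedComponentIn_eq hy2
  apply hx.2
  rw [e2, ← e1]
  exact mem_connectedComponentIn hxK

theorem pl_circle {f : ℝ × ℝ → ℂ} (hf : Continuous f) (h0 : ∀ x, f x ≠ 0) (p : ℝ × ℝ) (m : ℤ)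
    {B : Set (ℝ × ℝ)} (hB : Bornology.IsBounded B)
    (h : ∀ x ∉ B, f x = (plK x - plK p) ^ m) : m = 0 := by
  obtain ⟨g, hg, eg⟩ := pl_lift hf h0
  obtain ⟨R, hR⟩ := hB.subset_closedBall p
  set r : ℝ := 2 * |R| + 2 with hr
  have hr0 : 0 < r := by positivity
  let c : ℝ → ℝ × ℝ := fun t => p + (r * Real.cos t, r * Real.sin t)
  have hc : Continuous c := by fun_prop
  have hck : ∀ t : ℝ, plK (c t) - plK p = r * Complex.exp (t * Complex.I) := by
    intro t
    rw [Complex.exp_mul_I]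
    apply Complex.ext <;> simp [plK, c, Complex.cos_ofReal_re, Complex.sin_ofReal_re]
  have hcB : ∀ t, c t ∉ B := by
    intro t ht
    have := hR ht
    rw [Metric.mem_closedBall, dist_eq_norm] at this
    simp only [c, add_sub_cancel_left, Prod.norm_def, Real.norm_eq_abs, sup_le_iff, abs_mul, abs_of_pos hr0] at this
    have h1 := Real.sin_sq_add_cos_sq t
    have h2 := this.1
    have h3 := this.2
    have h4 : |Real.cos t| ≤ 1 := Real.abs_cos_le_one t
    have h5 : |Real.sin t| ≤ 1 := Real.abs_sin_le_one t
    have h6 : 1 ≤ |Real.cos t| + |Real.sin t| := by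
      rw [← sq_abs, ← sq_abs (Real.cos t)] at h1
      nlinarith [abs_nonneg (Real.cos t), abs_nonneg (Real.sin t)]
    have h7 := le_abs_self R
    nlinarith
  have key := pl_const (X := ℝ) isPreconnected_univ
    (g := fun t => g (c t) - m * (t * Complex.I)) (by fun_prop) (by
      have : ∀ t : ℝ, Complex.exp (g (c t) - m * (t * Complex.I)) = (r:ℂ) ^ m := by
        intro t
        rw [Complex.exp_sub, eg, h _ (hcB t), hck, mul_zpow, Complex.exp_int_mul]
        exact mul_div_cancel_right₀ _ (zpow_ne_zero _ (Complex.exp_ne_zero _))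
      intro x _ y _
      rw [this, this]) (mem_univ (0:ℝ)) (mem_univ (2 * Real.pi))
  simp only [c, Real.cos_zero, Real.sin_zero, Real.cos_two_pi, Real.sin_two_pi] at key
  have h8 : (m:ℂ) * (((2 * Real.pi : ℝ):ℂ) * Complex.I) = 0 := by
    have := sub_right_injective.eq_iff.1 key
    rw [← this]; simp
  have h9 : (((2 * Real.pi : ℝ):ℂ) * Complex.I) ≠ 0 := by
    apply mul_ne_zero _ Complex.I_ne_zero
    exact_mod_cast (by positivity : (2 * Real.pi : ℝ) ≠ 0)
  exact_mod_cast (mul_eq_zero.1 h8).resolve_right h9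

/-- Logarithm obstruction. -/
theorem pl_obstruct {K : Set (ℝ × ℝ)} (hK : IsCompact K) {p q : ℝ × ℝ} (hp : p ∈ Kᶜ)
    (hq : q ∈ Kᶜ) (hb : Bornology.IsBounded (connectedComponentIn Kᶜ p))
    (hne : q ∉ connectedComponentIn Kᶜ p) (m n : ℤ)
    (hl : PLog K (fun z => (plK z - plK p) ^ m * (plK z - plK q) ^ n)) : m = 0 := by
  classical
  obtain ⟨g, hg, eg⟩ := hl
  obtain ⟨G, hG⟩ := ContinuousMap.exists_restrict_eq hK.isClosed
    (⟨K.domRestrict g, continuousOn_iff_continuous_domRestrict.1 hg⟩ : C(K, ℂ))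
  have hG' : ∀ x ∈ K, G x = g x := fun x hx => congrArg (fun f => f ⟨x, hx⟩) hG
  set U := connectedComponentIn Kᶜ p with hU
  have hfr := pl_frontier_comp hK.isClosed p
  have hUo : IsOpen U := hK.isClosed.isOpen_compl.connectedComponentIn
  have hcl : closure U ⊆ U ∪ K := by
    rw [closure_eq_self_union_frontier]; exact union_subset_union_right _ hfr
  have hq1 : ∀ z ∈ closure U, plK z - plK q ≠ 0 := by
    intro z hz h
    have : z = q := plK_inj (sub_eq_zero.1 h)
    rcases hcl hz with h1 | h1
    · exact hne (this ▸ h1)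
    · exact hq (this ▸ h1)
  have hp1 : ∀ z ∉ U, plK z - plK p ≠ 0 := by
    intro z hz h
    have : z = p := plK_inj (sub_eq_zero.1 h)
    exact hz (this ▸ mem_connectedComponentIn hp)
  have hk := plK_cont
  refine pl_circle (f := fun z => if z ∈ U then Complex.exp (G z) * (plK z - plK q) ^ (-n)
    else (plK z - plK p) ^ m) ?_ ?_ p m hb ?_
  · refine continuous_if ?_ ?_ ?_
    · intro a ha
      have haK : a ∈ K := hfr ha
      have haq : plK a - plK q ≠ 0 := hq1 a ha.1
      rw [hG' a haK, eg a haK, mul_assoc, ← zpow_add₀ haq]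
      simp
    · refine ContinuousOn.mul (by fun_prop) (ContinuousOn.zpow₀ (by fun_prop) _ ?_)
      intro a ha; exact Or.inl (hq1 a ha)
    · refine ContinuousOn.zpow₀ (by fun_prop) _ ?_
      intro a ha
      have : a ∉ U := by
        have h1 : IsClosed {x | ¬ x ∈ U} := hUo.isClosed_compl
        rw [h1.closure_eq] at ha; exact ha
      exact Or.inl (hp1 a this)
  · intro x
    by_cases hx : x ∈ U
    · simp only [hx, if_true]
      exact mul_ne_zero (Complex.exp_ne_zero _) (zpow_ne_zero _ (hq1 x (subset_closure hx)))
    · simp only [hx, if_false]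
      exact zpow_ne_zero _ (hp1 x hx)
  · intro x hx
    simp [hx]
end

section
open Set Topology Filter

theorem pl_rank : 1 < Module.rank ℝ (ℝ × ℝ) := by
  rw [rank_prod', Module.rank_self]; norm_num

theorem pl_annulus (x : ℝ × ℝ) (I : Set ℝ) (hI : IsPreconnected I) :
    IsPreconnected ((fun y : (ℝ × ℝ) × ℝ => x + y.2 • y.1) '' (Metric.sphere (0 : ℝ × ℝ) 1 ×ˢ I)) := by
  apply IsPreconnected.image
  · exact (isPreconnected_sphere pl_rank 0 1).prod hI
  · fun_prop

theorem pl_annulus_eq (x : ℝ × ℝ) (I : Set ℝ) (hI : ∀ t ∈ I, 0 < t) :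
    ((fun y : (ℝ × ℝ) × ℝ => x + y.2 • y.1) '' (Metric.sphere (0 : ℝ × ℝ) 1 ×ˢ I))
      = {z | ‖z - x‖ ∈ I} := by
  ext z
  simp only [mem_image, mem_prod, mem_sphere_zero_iff_norm, Prod.exists, mem_ofPred_eq]
  constructor
  · rintro ⟨a, b, t, ⟨h1, h2⟩, rfl⟩
    rw [add_sub_cancel_left, norm_smul, h1, mul_one, Real.norm_eq_abs, abs_of_pos (hI t h2)]
    exact h2
  · intro h
    have h0 := hI _ h
    refine ⟨(‖z - x‖⁻¹ • (z - x)).1, (‖z - x‖⁻¹ • (z - x)).2, ‖z - x‖, ⟨?_, h⟩, ?_⟩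
    · simp only [Prod.mk.eta]
      rw [norm_smul, norm_inv, norm_norm, inv_mul_cancel₀ h0.ne']
    · simp only [Prod.mk.eta]
      rw [smul_smul, mul_inv_cancel₀ h0.ne', one_smul]; abel

theorem pl_far (R : ℝ) (hR : 0 ≤ R) : IsPreconnected {z : ℝ × ℝ | R < ‖z‖} := by
  have := pl_annulus 0 (Ioi R) isPreconnected_Ioi
  rw [pl_annulus_eq 0 (Ioi R) (fun t ht => hR.trans_lt ht)] at this
  simpa using this

theorem pl_punct (x : ℝ × ℝ) (r : ℝ) : IsPreconnected (Metric.ball x r \ {x}) := by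
  have := pl_annulus x (Ioo 0 r) isPreconnected_Ioo
  rw [pl_annulus_eq x (Ioo 0 r) (fun t ht => ht.1)] at this
  convert this using 1
  ext z
  simp [dist_eq_norm, sub_eq_zero, and_comm]

theorem pl_unbdd {K : Set (ℝ × ℝ)} (hK : IsCompact K) {p q : ℝ × ℝ}
    (h1 : ¬ Bornology.IsBounded (connectedComponentIn Kᶜ p))
    (h2 : ¬ Bornology.IsBounded (connectedComponentIn Kᶜ q)) :
    connectedComponentIn Kᶜ p = connectedComponentIn Kᶜ q := by
  obtain ⟨R, hR0, hR⟩ := hK.isBounded.exists_pos_norm_le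
  have hsub : {z : ℝ × ℝ | R < ‖z‖} ⊆ Kᶜ := fun z hz hzK => absurd (hR z hzK) (not_le.2 hz)
  have key : ∀ p : ℝ × ℝ, ¬ Bornology.IsBounded (connectedComponentIn Kᶜ p) →
      ∃ z, R < ‖z‖ ∧ z ∈ connectedComponentIn Kᶜ p := by
    intro p hp
    by_contra hcon
    push Not at hcon
    apply hp
    rw [isBounded_iff_forall_norm_le]
    refine ⟨R, fun z hz => ?_⟩
    by_contra h
    exact hcon z (not_le.1 h) hz
  obtain ⟨a, ha, hap⟩ := key p h1
  obtain ⟨b, hb, hbq⟩ := key q h2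
  rw [connectedComponentIn_eq hap, connectedComponentIn_eq hbq]
  exact connectedComponentIn_eq ((pl_far R hR0.le).subset_connectedComponentIn ha hsub hb)

theorem pl_exists_far {K : Set (ℝ × ℝ)} (hK : IsCompact K) :
    ∃ x ∉ K, ∀ J ⊆ K, ¬ Bornology.IsBounded (connectedComponentIn Jᶜ x) := by
  obtain ⟨R, hR0, hR⟩ := hK.isBounded.exists_pos_norm_le
  have hsub : {z : ℝ × ℝ | R < ‖z‖} ⊆ Kᶜ := fun z hz hzK => absurd (hR z hzK) (not_le.2 hz)
  have hx : ((R + 1, 0) : ℝ × ℝ) ∈ {z : ℝ × ℝ | R < ‖z‖} := by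
    simp only [mem_ofPred_eq, Prod.norm_def]
    refine lt_max_of_lt_left ?_
    rw [Real.norm_eq_abs]
    exact lt_of_lt_of_le (by linarith) (le_abs_self _)
  refine ⟨(R + 1, 0), hsub hx, fun J hJ hb => ?_⟩
  have h1 := (pl_far R hR0.le).subset_connectedComponentIn hx
    (hsub.trans (compl_subset_compl.2 hJ))
  have h2 := hb.subset h1
  obtain ⟨M, hM⟩ := isBounded_iff_forall_norm_le.1 h2
  have h3 : ((|M| + R + 1, 0) : ℝ × ℝ) ∈ {z : ℝ × ℝ | R < ‖z‖} := by
    simp only [mem_ofPred_eq, Prod.norm_def]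
    refine lt_max_of_lt_left ?_
    rw [Real.norm_eq_abs]
    exact lt_of_lt_of_le (by linarith [abs_nonneg M]) (le_abs_self _)
  have h4 := hM _ h3
  have h5 : |M| + R + 1 ≤ ‖((|M| + R + 1, 0) : ℝ × ℝ)‖ := by
    rw [Prod.norm_def]
    exact le_max_of_le_left (by rw [Real.norm_eq_abs]; exact le_abs_self _)
  linarith [le_abs_self M]

theorem pl_notsep {K : Set (ℝ × ℝ)} (hK : IsCompact K) {p q : ℝ × ℝ} (hp : p ∈ Kᶜ) (hq : q ∈ Kᶜ)
    (hl : PLog K (fun z => (plK z - plK p) / (plK z - plK q))) :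
    connectedComponentIn Kᶜ p = connectedComponentIn Kᶜ q := by
  by_contra hne
  have hp' : p ∉ connectedComponentIn Kᶜ q := fun h => hne (connectedComponentIn_eq h).symm
  have hq' : q ∉ connectedComponentIn Kᶜ p := fun h => hne (connectedComponentIn_eq h)
  obtain ⟨g, hg, eg⟩ := hl
  by_cases h1 : Bornology.IsBounded (connectedComponentIn Kᶜ p)
  · have := pl_obstruct hK hp hq h1 hq' 1 (-1) ⟨g, hg, fun x hx => by
      rw [eg x hx]; simp only [zpow_one, zpow_neg_one, div_eq_mul_inv]⟩
    exact one_ne_zero this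
  · by_cases h2 : Bornology.IsBounded (connectedComponentIn Kᶜ q)
    · have := pl_obstruct hK hq hp h2 hp' (-1) 1 ⟨g, hg, fun x hx => by
        rw [eg x hx]; simp only [zpow_one, zpow_neg_one, div_eq_mul_inv, mul_comm]⟩
      exact absurd this (by norm_num)
    · exact hne (pl_unbdd hK h1 h2)

theorem pl_arc_log {γ : ℝ → ℝ × ℝ} (hc : ContinuousOn γ (Icc 0 1)) (hi : InjOn γ (Icc 0 1))
    {f : ℝ × ℝ → ℂ} (hf : ContinuousOn f (γ '' Icc 0 1)) (h0 : ∀ x ∈ γ '' Icc 0 1, f x ≠ 0) :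
    PLog (γ '' Icc 0 1) f := by
  let P : ℝ → ℝ := fun t => (projIcc (0:ℝ) 1 zero_le_one t : ℝ)
  have hP : Continuous P := continuous_subtype_val.comp continuous_projIcc
  have hPm : ∀ t, P t ∈ Icc (0:ℝ) 1 := fun t => (projIcc (0:ℝ) 1 zero_le_one t).2
  have hγP : Continuous (fun t => γ (P t)) := hc.comp_continuous hP hPm
  obtain ⟨g, hg, eg⟩ := pl_lift (f := fun t : ℝ => f (γ (P t)))
    (hf.comp_continuous hγP (fun t => mem_image_of_mem _ (hPm t)))
    (fun t => h0 _ (mem_image_of_mem _ (hPm t)))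
  have hemb : IsClosedEmbedding (fun t : Icc (0:ℝ) 1 => γ t) := by
    apply Continuous.isClosedEmbedding (continuousOn_iff_continuous_domRestrict.1 hc)
    intro a b hab
    exact Subtype.ext (hi a.2 b.2 hab)
  obtain ⟨G, hG⟩ := ContinuousMap.exists_extension hemb
    (⟨fun t : Icc (0:ℝ) 1 => g t, hg.comp continuous_subtype_val⟩ : C(Icc (0:ℝ) 1, ℂ))
  refine ⟨G, G.continuous.continuousOn, ?_⟩
  rintro x ⟨t, ht, rfl⟩
  have h1 : G (γ t) = g t := congrArg (fun F => F ⟨t, ht⟩) hG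
  have h2 : P t = t := by simp only [P, projIcc_of_mem zero_le_one ht]
  rw [h1, eg, h2]

theorem pl_arc_interior {γ : ℝ → ℝ × ℝ} (hc : ContinuousOn γ (Icc 0 1)) (hi : InjOn γ (Icc 0 1)) :
    interior (γ '' Icc 0 1) = ∅ := by
  by_contra hne
  obtain ⟨x, hx⟩ := nonempty_iff_ne_empty.2 hne
  obtain ⟨s, hs, rfl⟩ := interior_subset hx
  have ho : IsOpen (interior (γ '' Icc 0 1)) := isOpen_interior
  -- find an interior parameter
  have h1 : γ ⁻¹' (interior (γ '' Icc 0 1)) ∈ 𝓝[Icc 0 1] s := (hc s hs) (ho.mem_nhds hx)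
  have h2 : s ∈ closure (Ioo (0:ℝ) 1) := by rw [closure_Ioo zero_ne_one]; exact hs
  obtain ⟨t, ht1, ht2⟩ : ∃ t ∈ Ioo (0:ℝ) 1, γ t ∈ interior (γ '' Icc 0 1) := by
    obtain ⟨W, hW, hWs⟩ := mem_nhdsWithin_iff_exists_mem_nhds_inter.1 h1
    obtain ⟨t, htW, ht⟩ := mem_closure_iff_nhds.1 h2 W hW
    exact ⟨t, ht, hWs ⟨htW, Ioo_subset_Icc_self ht⟩⟩
  obtain ⟨r, hr, hball⟩ := Metric.isOpen_iff.1 ho _ ht2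
  have hball' := hball.trans interior_subset
  have h3 : γ ⁻¹' (Metric.ball (γ t) r) ∈ 𝓝 t := by
    have : ContinuousAt γ t := hc.continuousAt (Icc_mem_nhds ht1.1 ht1.2)
    exact this (Metric.ball_mem_nhds _ hr)
  obtain ⟨ε, hε, hεs⟩ := Metric.mem_nhds_iff.1 h3
  have htI := Ioo_subset_Icc_self ht1
  set δ := min (ε / 2) (min t (1 - t)) with hδ
  have hδ0 : 0 < δ := lt_min (by linarith) (lt_min ht1.1 (by linarith [ht1.2]))
  have d1 : δ ≤ ε / 2 := min_le_left _ _
  have d2 : δ ≤ t := (min_le_right _ _).trans (min_le_left _ _)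
  have d3 : δ ≤ 1 - t := (min_le_right _ _).trans (min_le_right _ _)
  have ha : t - δ ∈ Icc (0:ℝ) 1 := ⟨by linarith, by linarith [ht1.2]⟩
  have hb : t + δ ∈ Icc (0:ℝ) 1 := ⟨by linarith [ht1.1], by linarith⟩
  have haB : γ (t - δ) ∈ Metric.ball (γ t) r := hεs (by
    rw [Metric.mem_ball, Real.dist_eq, abs_lt]; constructor <;> linarith)
  have hbB : γ (t + δ) ∈ Metric.ball (γ t) r := hεs (by
    rw [Metric.mem_ball, Real.dist_eq, abs_lt]; constructor <;> linarith)
  have s1 : Icc 0 t ⊆ Icc (0:ℝ) 1 := Icc_subset_Icc_right ht1.2.le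
  have s2 : Icc t 1 ⊆ Icc (0:ℝ) 1 := Icc_subset_Icc_left ht1.1.le
  have c1 : IsClosed (γ '' Icc 0 t) := (isCompact_Icc.image_of_continuousOn (hc.mono s1)).isClosed
  have c2 : IsClosed (γ '' Icc t 1) := (isCompact_Icc.image_of_continuousOn (hc.mono s2)).isClosed
  have hpre := isPreconnected_closed_iff.1 (pl_punct (γ t) r) _ _ c1 c2 (by
      rintro z ⟨hz, -⟩
      obtain ⟨w, hw, rfl⟩ := hball' hz
      rcases le_total w t with h | h
      · exact Or.inl ⟨w, ⟨hw.1, h⟩, rfl⟩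
      · exact Or.inr ⟨w, ⟨h, hw.2⟩, rfl⟩)
    ⟨γ (t - δ), ⟨haB, fun h => by
      have := hi ha htI h; linarith⟩, ⟨t - δ, ⟨ha.1, by linarith⟩, rfl⟩⟩
    ⟨γ (t + δ), ⟨hbB, fun h => by
      have := hi hb htI h; linarith⟩, ⟨t + δ, ⟨by linarith, hb.2⟩, rfl⟩⟩
  obtain ⟨z, ⟨-, hzne⟩, ⟨a, ha1, rfl⟩, ⟨b, hb1, hab⟩⟩ := hpre
  have := hi (s2 hb1) (s1 ha1) hab
  subst this
  have : b = t := le_antisymm ha1.2 hb1.1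
  exact hzne (by rw [this]; rfl)
end

section
open Set Topology Filter

theorem pl_fin {Φ N : Type*} [Finite N] (inc : N → Φ → Prop) (R : N → Φ → Φ → Prop)
    (b : ∀ e X Y, inc e X → inc e Y → X ≠ Y → ¬ R e X Y)
    (c : ∀ e X Y Z, ¬ R e X Y → ¬ R e Y Z → R e X Z)
    (d : ∀ S : Set Φ, S.Nonempty → (∀ X ∈ S, ∀ Y e, inc e X → inc e Y → Y ∈ S) → S = univ) :
    Finite Φ := by
  have hf : ∀ e, {X | inc e X}.Finite := by
    intro e
    by_contra h
    obtain ⟨X, hX⟩ := Set.Infinite.nonempty h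
    obtain ⟨Y, hY⟩ := (Set.Infinite.sdiff h (finite_singleton X)).nonempty
    obtain ⟨Z, hZ⟩ := (Set.Infinite.sdiff h ((finite_singleton X).union (finite_singleton Y))).nonempty
    have hXY : X ≠ Y := fun h => hY.2 h.symm
    have hYZ : Y ≠ Z := fun h => hZ.2 (Or.inr h.symm)
    have hXZ : X ≠ Z := fun h => hZ.2 (Or.inl h.symm)
    exact b e X Z hX hZ.1 hXZ (c e X Y Z (b e X Y hX hY.1 hXY) (b e Y Z hY.1 hZ.1 hYZ))
  by_cases h : ∀ X, ∃ e, inc e X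
  · have : (univ : Set Φ) = ⋃ e, {X | inc e X} := by
      ext X; simpa using h X
    rw [← Set.finite_univ_iff, this]
    exact Set.finite_iUnion hf
  · push Not at h
    obtain ⟨X, hX⟩ := h
    rw [← Set.finite_univ_iff, ← d {X} (singleton_nonempty X)
      (by rintro _ rfl Y e h1; exact absurd h1 (hX e))]
    exact finite_singleton X

theorem pl_comb {Φ N : Type*} [Fintype Φ] [Finite N] (inc : N → Φ → Prop) (R : N → Φ → Φ → Prop)
    (hR : ∀ e, Equivalence (R e))
    (a : ∀ e e' X Y, e ≠ e' → inc e' X → inc e' Y → R e X Y)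
    (b : ∀ e X Y, inc e X → inc e Y → X ≠ Y → ¬ R e X Y)
    (c : ∀ e X Y Z, ¬ R e X Y → ¬ R e Y Z → R e X Z)
    (d : ∀ S : Set Φ, S.Nonempty → (∀ X ∈ S, ∀ Y e, inc e X → inc e Y → Y ∈ S) → S = univ)
    (t : ∀ X, {e | inc e X}.ncard ≤ 3)
    (w : Φ → ℝ) (w0 : ∀ X, 0 ≤ w X) (w1 : ∑ X, w X = 1) (wq : ∀ X, w X ≤ 1 / 4) :
    ∃ e A B, inc e A ∧ inc e B ∧ ¬ R e A B ∧
      ∀ S : Set Φ, S ⊆ {Y | R e A Y} ∨ S ⊆ {Y | R e B Y} → ∑ᶠ Y ∈ S, w Y ≤ 3 / 4 := by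
  classical
  have : Fintype N := Fintype.ofFinite N
  let wt : Set Φ → ℝ := fun S => ∑ X, if X ∈ S then w X else 0
  have wt_mono : ∀ S T, S ⊆ T → wt S ≤ wt T := by
    intro S T h
    apply Finset.sum_le_sum
    intro X _
    by_cases hX : X ∈ S
    · simp [hX, h hX]
    · by_cases hT : X ∈ T <;> simp [hX, hT, w0]
  have wt_univ : wt univ = 1 := by simp [wt, w1]
  have wt_union : ∀ S T, wt (S ∪ T) ≤ wt S + wt T := by
    intro S T
    rw [← Finset.sum_add_distrib]
    apply Finset.sum_le_sum
    intro X _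
    have := w0 X
    by_cases hX : X ∈ S <;> by_cases hT : X ∈ T <;> simp [hX, hT, w0]
  have wt_compl : ∀ S, wt S + wt Sᶜ = 1 := by
    intro S
    rw [← w1, ← Finset.sum_add_distrib]
    apply Finset.sum_congr rfl
    intro X _
    by_cases hX : X ∈ S <;> simp [hX]
  have wt_fin : ∀ S : Set Φ, ∑ᶠ Y ∈ S, w Y = wt S := by
    intro S
    rw [finsum_eq_sum_of_fintype]
    apply Finset.sum_congr rfl
    intro X _
    by_cases hX : X ∈ S <;> simp [hX]
  -- it suffices to find an edge all of whose classes are light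
  by_cases hlight : ∃ e, ∀ X, wt {Y | R e X Y} ≤ 3 / 4
  · obtain ⟨e, he⟩ := hlight
    have key : ∀ X, ∃ A, inc e A ∧ R e X A := by
      intro X
      by_contra hcon
      push Not at hcon
      have := d {Y | R e X Y} ⟨X, (hR e).refl X⟩ (by
        intro Y hY Z f hf1 hf2
        by_cases hfe : f = e
        · subst hfe; exact absurd hY (hcon Y hf1)
        · exact (hR e).trans hY (a e f Y Z (Ne.symm hfe) hf1 hf2))
      have h1 := he X
      rw [this, wt_univ] at h1
      norm_num at h1
    have hne : Nonempty Φ := by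
      by_contra h
      rw [not_nonempty_iff] at h
      simp at w1
    obtain ⟨X⟩ := hne
    have : ∃ Y, ¬ R e X Y := by
      by_contra hcon
      push Not at hcon
      have h1 := he X
      have : {Y | R e X Y} = univ := by ext Y; simp [hcon Y]
      rw [this, wt_univ] at h1
      norm_num at h1
    obtain ⟨Y, hXY⟩ := this
    obtain ⟨A, hA, hXA⟩ := key X
    obtain ⟨B, hB, hYB⟩ := key Y
    refine ⟨e, A, B, hA, hB, fun h => hXY ((hR e).trans hXA ((hR e).trans h ((hR e).symm hYB))), ?_⟩
    intro S hS
    rw [wt_fin]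
    rcases hS with h | h
    · exact (wt_mono _ _ h).trans (he A)
    · exact (wt_mono _ _ h).trans (he B)
  exfalso
  push Not at hlight
  choose h hh using hlight
  let H : N → Set Φ := fun e => {Y | R e (h e) Y}
  have hHw : ∀ e, 3 / 4 < wt (H e) := hh
  have Hcl : ∀ e X Y, X ∈ H e → R e X Y → Y ∈ H e := fun e X Y hX hXY => (hR e).trans hX hXY
  have Hin : ∀ e X Y, X ∈ H e → Y ∈ H e → R e X Y :=
    fun e X Y hX hY => (hR e).trans ((hR e).symm hX) hY
  have Hout : ∀ e X Y, X ∉ H e → Y ∉ H e → R e X Y := by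
    intro e X Y hX hY
    exact c e X (h e) Y (fun h' => hX ((hR e).symm h')) hY
  have Hmeet : ∀ e e', (H e ∩ H e').Nonempty := by
    intro e e'
    by_contra hcon
    rw [not_nonempty_iff_eq_empty] at hcon
    have h1 : H e ⊆ (H e')ᶜ := by
      intro X hX hX'
      have : X ∈ H e ∩ H e' := ⟨hX, hX'⟩
      rw [hcon] at this; exact this
    have h2 := wt_mono _ _ h1
    have h3 := wt_compl (H e')
    linarith [hHw e, hHw e']
  have hne : Nonempty Φ := by
    by_contra h
    rw [not_nonempty_iff] at h
    simp at w1
  -- a face in all heavy sides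
  have hX : ∃ X, ∀ e, X ∈ H e := by
    by_cases hN : IsEmpty N
    · exact ⟨hne.some, fun e => hN.elim e⟩
    rw [not_isEmpty_iff] at hN
    obtain ⟨e, -, hmin⟩ := Finset.exists_min_image (Finset.univ : Finset N) (fun e => (H e).ncard)
      Finset.univ_nonempty
    by_cases hall : H e = univ
    · refine ⟨hne.some, fun e' => ?_⟩
      have h1 := hmin e' (Finset.mem_univ _)
      rw [hall] at h1
      have : H e' = univ := Set.eq_of_subset_of_ncard_le (subset_univ _) h1
      rw [this]; trivial
    have : ∃ X ∈ H e, inc e X := by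
      by_contra hcon
      push Not at hcon
      apply hall
      refine d _ ⟨h e, (hR e).refl _⟩ ?_
      intro Y hY Z f hf1 hf2
      by_cases hfe : f = e
      · subst hfe; exact absurd hf1 (hcon Y hY)
      · exact Hcl e Y Z hY (a e f Y Z (Ne.symm hfe) hf1 hf2)
    obtain ⟨X, hXH, hXe⟩ := this
    refine ⟨X, fun e' => ?_⟩
    by_contra hXe'
    have hee' : e ≠ e' := by rintro rfl; exact hXe' hXH
    by_cases hcase : ∃ A ∈ H e, inc e' A
    · obtain ⟨A, hAH, hA⟩ := hcase
      have hall' : ∀ B, inc e' B → B ∈ H e := fun B hB => Hcl e A B hAH (a e e' A B hee' hA hB)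
      have hsub : H e' ⊆ H e := by
        intro Y hY
        by_contra hYe
        have := d {Y | Y ∉ H e ∧ Y ∈ H e'} ⟨Y, hYe, hY⟩ (by
          rintro Y ⟨hY1, hY2⟩ Z f hf1 hf2
          have hfe' : f ≠ e' := by rintro rfl; exact hY1 (hall' Y hf1)
          have hfe : f ≠ e := by
            rintro rfl
            exact hXe' (Hcl e' Y X hY2 (a e' f Y X hfe'.symm hf1 hXe))
          exact ⟨fun h => hY1 (Hcl e Z Y h (a e f Z Y hfe.symm hf2 hf1)),
            Hcl e' Y Z hY2 (a e' f Y Z hfe'.symm hf1 hf2)⟩)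
        have hX' : X ∈ {Y | Y ∉ H e ∧ Y ∈ H e'} := by rw [this]; trivial
        exact hX'.1 hXH
      have h1 := hmin e' (Finset.mem_univ _)
      have := Set.eq_of_subset_of_ncard_le hsub h1
      exact hXe' (this ▸ hXH)
    · push Not at hcase
      have := d (H e ∩ H e') (Hmeet e e') (by
        rintro Y ⟨hY1, hY2⟩ Z f hf1 hf2
        have hfe' : f ≠ e' := by rintro rfl; exact hcase Y hY1 hf1
        have hfe : f ≠ e := by
          rintro rfl
          by_cases hXY : X = Y
          · exact hXe' (hXY ▸ hY2)
          · exact b f X Y hXe hf1 hXY (Hin f X Y hXH hY1)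
        exact ⟨Hcl e Y Z hY1 (a e f Y Z hfe.symm hf1 hf2),
          Hcl e' Y Z hY2 (a e' f Y Z hfe'.symm hf1 hf2)⟩)
      have hX' : X ∈ H e ∩ H e' := by rw [this]; trivial
      exact hXe' hX'.2
  obtain ⟨X, hX⟩ := hX
  have hcov := d ({X} ∪ {Y | ∃ e, inc e X ∧ Y ∉ H e}) ⟨X, Or.inl rfl⟩ (by
    intro Y hY Z f hf1 hf2
    by_cases hZX : Z = X
    · exact Or.inl hZX
    rcases hY with hY | ⟨e, heX, hYe⟩
    · have hY : Y = X := hY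
      subst hY
      exact Or.inr ⟨f, hf1, fun hZ => b f Y Z hf1 hf2 (Ne.symm hZX) (Hin f Y Z (hX f) hZ)⟩
    · by_cases hfe : f = e
      · subst hfe
        exact Or.inr ⟨f, heX, fun hZ => b f X Z heX hf2 (Ne.symm hZX) (Hin f X Z (hX f) hZ)⟩
      · exact Or.inr ⟨e, heX, fun hZ => hYe (Hcl e Z Y hZ (a e f Z Y (Ne.symm hfe) hf2 hf1))⟩)
  let E : Finset N := Finset.univ.filter (fun e => inc e X)
  have hE : E.card ≤ 3 := by
    have := t X
    rw [Set.ncard_eq_toFinset_card'] at this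
    convert this using 2
    ext e; simp [E]
  have hbound : ∀ s : Finset N, wt {Y | ∃ e ∈ s, Y ∉ H e} ≤ ∑ e ∈ s, wt (H e)ᶜ := by
    intro s
    induction s using Finset.induction_on with
    | empty => simp [wt]
    | insert e s hes ih =>
      rw [Finset.sum_insert hes]
      have : {Y | ∃ e' ∈ insert e s, Y ∉ H e'} = (H e)ᶜ ∪ {Y | ∃ e ∈ s, Y ∉ H e} := by
        ext Y; simp
      rw [this]
      exact (wt_union _ _).trans (by linarith)
  have hsing : wt {X} ≤ 1 / 4 := by
    have : wt {X} = w X := by simp [wt]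
    rw [this]; exact wq X
  have hE1 : {Y | ∃ e, inc e X ∧ Y ∉ H e} = {Y | ∃ e ∈ E, Y ∉ H e} := by
    ext Y; simp [E]
  have htot : 1 ≤ wt {X} + ∑ e ∈ E, wt (H e)ᶜ := by
    rw [← wt_univ, ← hcov, hE1]
    exact (wt_union _ _).trans (by linarith [hbound E])
  have hcl : ∀ e, wt (H e)ᶜ < 1 / 4 := fun e => by linarith [wt_compl (H e), hHw e]
  rcases E.eq_empty_or_nonempty with h0 | h0
  · rw [h0] at htot; simp at htot; linarith
  · have h1 : ∑ e ∈ E, wt (H e)ᶜ < ∑ e ∈ E, (1 / 4 : ℝ) :=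
      Finset.sum_lt_sum_of_nonempty h0 (fun e _ => hcl e)
    rw [Finset.sum_const, nsmul_eq_mul] at h1
    have h2 : (E.card : ℝ) ≤ 3 := by exact_mod_cast hE
    linarith
end

section
open Set Topology Filter

section
variable {V : Type} {G : SimpleGraph V} (emb : UPlaneEmbedding G)

theorem pl_arc_symm (u v : V) : emb.arc v u '' Icc 0 1 = emb.arc u v '' Icc 0 1 := by
  have key : ∀ u v, emb.arc v u '' Icc 0 1 ⊆ emb.arc u v '' Icc 0 1 := by
    rintro u v _ ⟨t, ht, rfl⟩
    exact ⟨1 - t, ⟨by linarith [ht.2], by linarith [ht.1]⟩, (emb.arc_symm u v t).symm⟩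
  exact Subset.antisymm (key u v) (key v u)

theorem pl_mem_ud {E : Set (Sym2 V)} {x : ℝ × ℝ} :
    x ∈ udrawing emb E ↔ ∃ u v, s(u, v) ∈ E ∧ G.Adj u v ∧ x ∈ emb.arc u v '' Icc 0 1 := by
  simp only [udrawing, mem_iUnion, exists_prop, and_assoc]

theorem pl_ud_mono {E E' : Set (Sym2 V)} (h : E ⊆ E') : udrawing emb E ⊆ udrawing emb E' := by
  intro x hx
  obtain ⟨u, v, h1, h2⟩ := (pl_mem_ud emb).1 hx
  exact (pl_mem_ud emb).2 ⟨u, v, h h1, h2⟩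

theorem pl_ud_full (E : Set (Sym2 V)) : udrawing emb E ⊆ ufullDrawing emb := by
  intro x hx
  obtain ⟨u, v, h1, h2, h3⟩ := (pl_mem_ud emb).1 hx
  exact (pl_mem_ud emb).2 ⟨u, v, h2, h2, h3⟩

theorem pl_ud_union (E E' : Set (Sym2 V)) :
    udrawing emb (E ∪ E') = udrawing emb E ∪ udrawing emb E' := by
  ext x
  constructor
  · intro hx
    obtain ⟨u, v, h1 | h1, h2⟩ := (pl_mem_ud emb).1 hx
    · exact Or.inl ((pl_mem_ud emb).2 ⟨u, v, h1, h2⟩)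
    · exact Or.inr ((pl_mem_ud emb).2 ⟨u, v, h1, h2⟩)
  · rintro (h | h)
    · exact pl_ud_mono emb subset_union_left h
    · exact pl_ud_mono emb subset_union_right h

theorem pl_ud_single {u v : V} (h : G.Adj u v) :
    udrawing emb {s(u, v)} = emb.arc u v '' Icc 0 1 := by
  ext x
  rw [pl_mem_ud]
  constructor
  · rintro ⟨a, b, h1, h2, h3⟩
    rcases Sym2.eq_iff.1 (mem_singleton_iff.1 h1) with ⟨rfl, rfl⟩ | ⟨rfl, rfl⟩
    · exact h3
    · rw [pl_arc_symm]; exact h3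
  · intro hx; exact ⟨u, v, rfl, h, hx⟩

theorem pl_arc_compact {u v : V} (h : G.Adj u v) : IsCompact (emb.arc u v '' Icc 0 1) :=
  isCompact_Icc.image_of_continuousOn (emb.arc_cont u v h)

theorem pl_ud_compact [Finite V] (E : Set (Sym2 V)) : IsCompact (udrawing emb E) := by
  refine isCompact_iUnion fun u => isCompact_iUnion fun v => isCompact_iUnion fun h => ?_
  exact pl_arc_compact emb h.2

theorem pl_pos_left {u v : V} (h : G.Adj u v) : emb.pos u ∈ emb.arc u v '' Icc 0 1 :=
  ⟨0, by simp, emb.arc_start u v h⟩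

theorem pl_pos_right {u v : V} (h : G.Adj u v) : emb.pos v ∈ emb.arc u v '' Icc 0 1 :=
  ⟨1, by simp, emb.arc_end u v h⟩

theorem pl_arc_preconn {u v : V} (h : G.Adj u v) : IsPreconnected (emb.arc u v '' Icc 0 1) :=
  isPreconnected_Icc.image _ (emb.arc_cont u v h)

theorem pl_ud_interior [Finite V] (E : Set (Sym2 V)) : Dense (udrawing emb E)ᶜ := by
  have : (udrawing emb E)ᶜ = ⋂ i : {p : V × V // s(p.1, p.2) ∈ E ∧ G.Adj p.1 p.2},
      (emb.arc i.1.1 i.1.2 '' Icc 0 1)ᶜ := by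
    ext x
    simp only [mem_compl_iff, pl_mem_ud, mem_iInter, Subtype.forall, Prod.forall, not_exists, not_and,
      and_imp]
  rw [this]
  apply dense_iInter_of_isOpen
  · intro i
    exact (pl_arc_compact emb i.2.2).isClosed.isOpen_compl
  · intro i
    rw [← interior_eq_empty_iff_dense_compl]
    exact pl_arc_interior (emb.arc_cont _ _ i.2.2) (emb.arc_inj _ _ i.2.2)

/-- Two distinct edges meet only at vertices. -/
theorem pl_meet {u v a b : V} (h : G.Adj u v) (h' : G.Adj a b) (hne : s(u, v) ≠ s(a, b))
    {x : ℝ × ℝ} (hx : x ∈ emb.arc u v '' Icc 0 1) (hx' : x ∈ emb.arc a b '' Icc 0 1) :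
    x = emb.pos u ∨ x = emb.pos v := by
  have := emb.arc_meet u v a b h h' (by
    intro heq
    apply hne
    rw [Sym2.eq_iff]
    rw [Set.pair_eq_pair_iff] at heq
    exact heq) ⟨hx, hx'⟩
  simpa using this.1

theorem pl_walk {H : SimpleGraph V} (hH : H ≤ G) {u v : V} (p : H.Walk u v) :
    IsPreconnected (insert (emb.pos u) (udrawing emb {e | e ∈ p.edges})) ∧
      emb.pos v ∈ insert (emb.pos u) (udrawing emb {e | e ∈ p.edges}) := by
  induction p with
  | @nil w =>
    have : udrawing emb {e | e ∈ (SimpleGraph.Walk.nil : H.Walk w w).edges} = ∅ := by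
      ext x; simp [pl_mem_ud]
    rw [this]
    simp [isPreconnected_singleton]
  | @cons u w v h p ih =>
    have hG := hH h
    have e1 : {e | e ∈ (SimpleGraph.Walk.cons h p).edges} = {s(u, w)} ∪ {e | e ∈ p.edges} := by
      ext e; simp
    rw [e1, pl_ud_union, pl_ud_single emb hG]
    have e2 : insert (emb.pos u) (emb.arc u w '' Icc 0 1 ∪ udrawing emb {e | e ∈ p.edges})
      = emb.arc u w '' Icc 0 1 ∪ insert (emb.pos w) (udrawing emb {e | e ∈ p.edges}) := by
      ext x
      have h1 := pl_pos_left emb hG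
      have h2 := pl_pos_right emb hG
      constructor
      · rintro (rfl | h | h)
        · exact Or.inl h1
        · exact Or.inl h
        · exact Or.inr (Or.inr h)
      · rintro (h | rfl | h)
        · exact Or.inr (Or.inl h)
        · exact Or.inr (Or.inl h2)
        · exact Or.inr (Or.inr h)
    rw [e2]
    exact ⟨(pl_arc_preconn emb hG).union (emb.pos w) (pl_pos_right emb hG) (mem_insert _ _) ih.1,
      Or.inr ih.2⟩

theorem pl_potential {T : SimpleGraph V} (hT : T.IsTree) (d : V → V → ℂ)
    (hd : ∀ u v, d v u = - d u v) (r : V) (c : ℂ) :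
    ∃ ψ : V → ℂ, ψ r = c ∧ ∀ u v, T.Adj u v → ψ v - ψ u = d u v := by
  classical
  choose p hp hpu using hT.existsUnique_path r
  let σ : ∀ v, T.Walk r v → ℂ := fun v q => (q.darts.map (fun e => d e.fst e.snd)).sum
  refine ⟨fun v => c + σ v (p v), ?_, ?_⟩
  · have : p r = SimpleGraph.Walk.nil := (hpu r _ SimpleGraph.Walk.IsPath.nil).symm
    simp [this, σ]
  · have key : ∀ u v, T.Adj u v → u ∈ (p v).support → σ v (p v) - σ u (p u) = d u v := by
      intro u v huv hu
      have := hT.2.path_concat (hp u) (hp v) huv hu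
      rw [this]
      simp [σ, SimpleGraph.Walk.darts_concat]
    intro u v huv
    simp only [add_sub_add_left_eq_sub]
    by_cases hu : u ∈ (p v).support
    · exact key u v huv hu
    · have hv : v ∈ (p u).support :=
        hT.2.mem_support_of_ne_mem_support_of_adj_of_isPath (hp u) (hp v) huv hu
      have := key v u huv.symm hv
      rw [hd u v] at this
      rw [← neg_sub, this, neg_neg]

theorem pl_tree_log [Finite V] {T : SimpleGraph V} (hTG : T ≤ G) (hT : T.IsTree) {f : ℝ × ℝ → ℂ}
    (hf : ContinuousOn f (udrawing emb T.edgeSet)) (h0 : ∀ x ∈ udrawing emb T.edgeSet, f x ≠ 0) :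
    PLog (udrawing emb T.edgeSet) f := by
  classical
  have hsub : ∀ u v, T.Adj u v → emb.arc u v '' Icc 0 1 ⊆ udrawing emb T.edgeSet :=
    fun u v h x hx => (pl_mem_ud emb).2 ⟨u, v, h, hTG h, hx⟩
  have hex : ∀ e : Sym2 V, ∃ g : ℝ × ℝ → ℂ, ∀ u v, e = s(u, v) → T.Adj u v →
      ContinuousOn g (emb.arc u v '' Icc 0 1) ∧
        ∀ x ∈ emb.arc u v '' Icc 0 1, Complex.exp (g x) = f x := by
    intro e
    induction e using Sym2.ind with
    | _ a b =>
      by_cases hab : T.Adj a b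
      · obtain ⟨g, hg, eg⟩ := pl_arc_log (emb.arc_cont a b (hTG hab)) (emb.arc_inj a b (hTG hab))
          (hf.mono (hsub a b hab)) (fun x hx => h0 x (hsub a b hab hx))
        refine ⟨g, fun u v huv _ => ?_⟩
        rcases Sym2.eq_iff.1 huv with ⟨rfl, rfl⟩ | ⟨rfl, rfl⟩
        · exact ⟨hg, eg⟩
        · rw [pl_arc_symm]; exact ⟨hg, eg⟩
      · refine ⟨0, fun u v huv h => absurd ?_ hab⟩
        have : s(u, v) ∈ T.edgeSet := h
        rw [← huv] at this; exact this
  choose g hg using hex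
  obtain ⟨r⟩ := hT.1.nonempty
  obtain ⟨ψ, hψr, hψ⟩ := pl_potential hT
    (fun u v => g s(u, v) (emb.pos v) - g s(u, v) (emb.pos u))
    (fun u v => by rw [Sym2.eq_swap]; ring) r (Complex.log (f (emb.pos r)))
  have hTne : ∀ u v, T.Adj u v → f (emb.pos u) ≠ 0 := fun u v h =>
    h0 _ (hsub u v h (pl_pos_left emb (hTG h)))
  -- vertex values, as soon as the vertex lies on an edge
  have hstep : ∀ u v, T.Adj u v → Complex.exp (ψ u) = f (emb.pos u) →
      Complex.exp (ψ v) = f (emb.pos v) := by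
    intro u v h hu
    have h1 : ψ v = ψ u + (g s(u, v) (emb.pos v) - g s(u, v) (emb.pos u)) := by
      rw [← hψ u v h]; ring
    obtain ⟨-, eg⟩ := hg s(u, v) u v rfl h
    rw [h1, Complex.exp_add, Complex.exp_sub, hu, eg _ (pl_pos_left emb (hTG h)),
      eg _ (pl_pos_right emb (hTG h)), mul_div_cancel₀ _ (hTne u v h)]
  have hexp : ∀ u v, T.Adj u v → Complex.exp (ψ u) = f (emb.pos u) := by
    intro u v huv
    have hr : Complex.exp (ψ r) = f (emb.pos r) := by
      rw [hψr]
      apply Complex.exp_log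
      by_cases hru : r = u
      · rw [hru]; exact hTne u v huv
      · obtain ⟨q⟩ := hT.1.preconnected r u
        cases q with
        | nil => exact absurd rfl hru
        | cons h _ => exact hTne _ _ h
    obtain ⟨q⟩ := hT.1.preconnected r u
    clear huv hψr
    induction q with
    | nil => exact hr
    | cons h q ih => exact ih (hstep _ _ h hr)
  -- now glue over finite sets of darts
  have hfin : ∀ s : Finset (V × V), (∀ p ∈ s, T.Adj p.1 p.2) →
      ∃ k : ℝ × ℝ → ℂ, ContinuousOn k (⋃ p ∈ s, emb.arc p.1 p.2 '' Icc 0 1) ∧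
        (∀ x ∈ (⋃ p ∈ s, emb.arc p.1 p.2 '' Icc 0 1), ∀ p : V × V, T.Adj p.1 p.2 →
          x ∈ emb.arc p.1 p.2 '' Icc 0 1 →
          k x = g s(p.1, p.2) x + (ψ p.1 - g s(p.1, p.2) (emb.pos p.1))) := by
    -- edge functions are compatible
    have hcompat : ∀ a b c d : V, T.Adj a b → T.Adj c d → ∀ x, x ∈ emb.arc a b '' Icc 0 1 →
        x ∈ emb.arc c d '' Icc 0 1 →
        g s(a, b) x + (ψ a - g s(a, b) (emb.pos a)) = g s(c, d) x + (ψ c - g s(c, d) (emb.pos c)) := by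
      have hv1 : ∀ a b : V, T.Adj a b →
          g s(a, b) (emb.pos b) + (ψ a - g s(a, b) (emb.pos a)) = ψ b := by
        intro a b h
        have := hψ a b h
        linear_combination -this
      have hval : ∀ a b : V, T.Adj a b → ∀ w, emb.pos w ∈ emb.arc a b '' Icc 0 1 →
          g s(a, b) (emb.pos w) + (ψ a - g s(a, b) (emb.pos a)) = ψ w := by
        intro a b h w hw
        rcases emb.arc_avoid a b (hTG h) w hw with rfl | rfl
        · ring
        · exact hv1 a w h
      intro a b c d hab hcd x hx hx'
      by_cases heq : s(a, b) = s(c, d)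
      · rcases Sym2.eq_iff.1 heq with ⟨rfl, rfl⟩ | ⟨rfl, rfl⟩
        · rfl
        · have := hv1 a b hab
          rw [Sym2.eq_swap (a := b) (b := a)]
          linear_combination this
      · rcases pl_meet emb (hTG hab) (hTG hcd) heq hx hx' with rfl | rfl
        · rw [hval a b hab _ hx, hval c d hcd _ hx']
        · rw [hval a b hab _ hx, hval c d hcd _ hx']
    intro s
    induction s using Finset.induction_on with
    | empty => intro _; exact ⟨0, by simp, by simp⟩
    | insert p s hps ih =>
      intro hs
      obtain ⟨k, hk, ek⟩ := ih (fun q hq => hs q (Finset.mem_insert_of_mem hq))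
      have hp := hs p (Finset.mem_insert_self _ _)
      have hcl : IsClosed (⋃ q ∈ s, emb.arc q.1 q.2 '' Icc 0 1) :=
        s.finite_toSet.isClosed_biUnion fun q hq =>
          (pl_arc_compact emb (hTG (hs q (Finset.mem_insert_of_mem hq)))).isClosed
      obtain ⟨l, hl, l1, l2⟩ := pl_glue (pl_arc_compact emb (hTG hp)).isClosed hcl
        (g := fun x => g s(p.1, p.2) x + (ψ p.1 - g s(p.1, p.2) (emb.pos p.1)))
        ((hg s(p.1, p.2) p.1 p.2 rfl hp).1.add continuousOn_const) hk
        (fun x hx hx' => (ek x hx' p hp hx).symm)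
      rw [Finset.set_biUnion_insert]
      refine ⟨l, hl, ?_⟩
      rintro x (hx | hx) q hq hxq
      · rw [l1 x hx]
        exact hcompat _ _ _ _ hp hq x hx hxq
      · rw [l2 x hx]
        exact ek x hx q hq hxq
  have := Fintype.ofFinite V
  obtain ⟨k, hk, ek⟩ := hfin (Finset.univ.filter fun p : V × V => T.Adj p.1 p.2) (by simp)
  have hsub2 : udrawing emb T.edgeSet ⊆
      ⋃ p ∈ (Finset.univ.filter fun p : V × V => T.Adj p.1 p.2), emb.arc p.1 p.2 '' Icc 0 1 := by
    intro x hx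
    obtain ⟨u, v, h1, -, h3⟩ := (pl_mem_ud emb).1 hx
    simp only [mem_iUnion]
    exact ⟨(u, v), by simpa using h1, h3⟩
  refine ⟨k, hk.mono hsub2, ?_⟩
  intro x hx
  obtain ⟨u, v, h1, h2, h3⟩ := (pl_mem_ud emb).1 hx
  have h1 : T.Adj u v := h1
  obtain ⟨-, eg⟩ := hg s(u, v) u v rfl h1
  rw [ek x (hsub2 hx) (u, v) h1 h3, Complex.exp_add, Complex.exp_sub, eg x h3,
    eg _ (pl_pos_left emb h2), hexp u v h1, div_self (hTne u v h1), mul_one]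

end
end

section
open Set Topology Filter

section
variable {V : Type} {G : SimpleGraph V} (emb : UPlaneEmbedding G)

theorem pl_face_open [Finite V] {F} (hF : IsUFace emb F) : IsOpen F := by
  obtain ⟨x, hx, rfl⟩ := hF
  exact (pl_ud_compact emb _).isClosed.isOpen_compl.connectedComponentIn

theorem pl_face_conn {F} (hF : IsUFace emb F) : IsPreconnected F := by
  obtain ⟨x, hx, rfl⟩ := hF
  exact isPreconnected_connectedComponentIn

theorem pl_face_sub {F} (hF : IsUFace emb F) (E : Set (Sym2 V)) : F ⊆ (udrawing emb E)ᶜ := by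
  obtain ⟨x, hx, rfl⟩ := hF
  exact (connectedComponentIn_subset _ _).trans (compl_subset_compl.2 (pl_ud_full emb E))

theorem pl_face_eq {F} (hF : IsUFace emb F) {x} (hx : x ∈ F) :
    F = connectedComponentIn (ufullDrawing emb)ᶜ x := by
  obtain ⟨y, hy, rfl⟩ := hF
  exact connectedComponentIn_eq hx

theorem pl_face_mk {x} (hx : x ∉ ufullDrawing emb) :
    ∃ F, IsUFace emb F ∧ x ∈ F :=
  ⟨_, ⟨x, hx, rfl⟩, mem_connectedComponentIn hx⟩

theorem pl_comp_of_conn {S U : Set (ℝ × ℝ)} (hS : IsPreconnected S) (hU : S ⊆ U) {x y} (hx : x ∈ S)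
    (hy : y ∈ S) : connectedComponentIn U x = connectedComponentIn U y :=
  connectedComponentIn_eq (hS.subset_connectedComponentIn hx hU hy)

theorem pl_comp_mono {A B : Set (ℝ × ℝ)} (h : A ⊆ B) {x y} (hx : x ∈ A) (hy : y ∈ A)
    (he : connectedComponentIn A x = connectedComponentIn A y) :
    connectedComponentIn B x = connectedComponentIn B y := by
  have : y ∈ connectedComponentIn A x := he ▸ mem_connectedComponentIn hy
  exact connectedComponentIn_eq (connectedComponentIn_mono x h this)

theorem pl_adj [Finite V] (htri : IsTriangulation emb) {E : Set (Sym2 V)} {u v : V} (h : G.Adj u v)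
    (hE : s(u, v) ∉ E) {F F'} (hF : IsUFace emb F) (hF' : IsUFace emb F') (h1 : OnFace emb F u)
    (h2 : OnFace emb F v) (h3 : OnFace emb F' u) (h4 : OnFace emb F' v) {x y} (hx : x ∈ F)
    (hy : y ∈ F') :
    connectedComponentIn (udrawing emb E)ᶜ x = connectedComponentIn (udrawing emb E)ᶜ y := by
  set z := emb.arc u v (1 / 2) with hz
  have hzE : z ∉ udrawing emb E := by
    intro hzE
    obtain ⟨a, b, hab, hG, hm⟩ := (pl_mem_ud emb).1 hzE
    have hi := emb.arc_inj u v h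
    rcases pl_meet emb h hG (fun hh => hE (hh ▸ hab)) (x := z) ⟨1 / 2, by norm_num, rfl⟩ hm with h0 | h0
    · rw [← emb.arc_start u v h] at h0
      have := hi (by norm_num) (by norm_num) h0
      norm_num at this
    · rw [← emb.arc_end u v h] at h0
      have := hi (by norm_num) (by norm_num) h0
      norm_num at this
  have key : ∀ F, IsUFace emb F → OnFace emb F u → OnFace emb F v → ∀ x ∈ F,
      connectedComponentIn (udrawing emb E)ᶜ x = connectedComponentIn (udrawing emb E)ᶜ z := by
    intro F hF h1 h2 x hx
    have hzF : z ∈ closure F := by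
      apply frontier_subset_closure
      rw [(htri F hF).2.2]
      exact (pl_mem_ud emb).2 ⟨u, v, ⟨u, v, rfl, h1, h2, h⟩, h, 1 / 2, by norm_num, rfl⟩
    refine pl_comp_of_conn (S := insert z F) ?_ ?_ (mem_insert_of_mem _ hx) (mem_insert _ _)
    · exact (pl_face_conn emb hF).subset_closure (subset_insert _ _)
        (insert_subset hzF subset_closure)
    · exact insert_subset hzE (pl_face_sub emb hF E)
  rw [key F hF h1 h2 x hx, key F' hF' h3 h4 y hy]

theorem pl_sep [Finite V] (htri : IsTriangulation emb) {H : SimpleGraph V} (hH : H ≤ G)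
    {E : Set (Sym2 V)} {u v : V} (h : G.Adj u v) (p : H.Walk u v) (hp : s(u, v) ∉ p.edges)
    (hE : ∀ e ∈ p.edges, e ∈ E) (hE' : s(u, v) ∈ E)
    {F F'} (hF : IsUFace emb F) (hF' : IsUFace emb F') (h1 : OnFace emb F u)
    (h2 : OnFace emb F v) (h3 : OnFace emb F' u) (h4 : OnFace emb F' v) {x y} (hx : x ∈ F)
    (hy : y ∈ F')
    (he : connectedComponentIn (udrawing emb E)ᶜ x = connectedComponentIn (udrawing emb E)ᶜ y) :
    F = F' := by
  have hpG : ∀ e ∈ p.edges, e ∈ G.edgeSet := fun e he =>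
    SimpleGraph.edgeSet_mono hH (p.edges_subset_edgeSet he)
  set D := udrawing emb ({e | e ∈ p.edges} ∪ {s(u, v)}) with hD
  set A := udrawing emb (G.edgeSet \ {s(u, v)}) with hA
  have hDE : D ⊆ udrawing emb E := by
    apply pl_ud_mono
    rintro e (he | he)
    · exact hE e he
    · rw [mem_singleton_iff] at he; rw [he]; exact hE'
  have heD := pl_comp_mono (compl_subset_compl.2 hDE) (pl_face_sub emb hF E hx)
    (pl_face_sub emb hF' E hy) he
  have hAe := pl_adj emb htri (E := G.edgeSet \ {s(u, v)}) h (by simp) hF hF' h1 h2 h3 h4 hx hy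
  have hxD := pl_face_sub emb hF ({e | e ∈ p.edges} ∪ {s(u, v)}) hx
  have hyD := pl_face_sub emb hF' ({e | e ∈ p.edges} ∪ {s(u, v)}) hy
  have hxA := pl_face_sub emb hF (G.edgeSet \ {s(u, v)}) hx
  have hyA := pl_face_sub emb hF' (G.edgeSet \ {s(u, v)}) hy
  have l1 := PLog.of_same (pl_ud_compact emb _) hxD (heD ▸ mem_connectedComponentIn hyD)
  have l2 := PLog.of_same (pl_ud_compact emb _) hxA (hAe ▸ mem_connectedComponentIn hyA)
  obtain ⟨w1, w2⟩ := pl_walk emb hH p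
  have hpA : udrawing emb {e | e ∈ p.edges} ⊆ A := by
    apply pl_ud_mono
    intro e he
    refine ⟨hpG e he, fun h => hp ?_⟩
    rw [mem_singleton_iff] at h; rw [← h]; exact he
  have huA : emb.pos u ∈ udrawing emb {e | e ∈ p.edges} := by
    cases p with
    | nil => exact absurd h (G.loopless.irrefl _)
    | cons hh q =>
      exact (pl_mem_ud emb).2 ⟨_, _, by simp, hH hh, pl_pos_left emb (hH hh)⟩
  have hint : A ∩ D = insert (emb.pos u) (udrawing emb {e | e ∈ p.edges}) := by
    apply Subset.antisymm
    · rintro z ⟨hzA, hzD⟩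
      rw [hD, pl_ud_union, pl_ud_single emb h] at hzD
      rcases hzD with hzD | hzD
      · exact Or.inr hzD
      · obtain ⟨a, b, hab, hG, hm⟩ := (pl_mem_ud emb).1 hzA
        rcases pl_meet emb h hG (fun hh => hab.2 hh.symm) hzD hm with rfl | rfl
        · exact Or.inl rfl
        · exact w2
    · rw [insert_eq_of_mem huA]
      exact subset_inter hpA (pl_ud_mono emb subset_union_left)
  have l3 := PLog.janis (pl_ud_compact emb _).isClosed (pl_ud_compact emb _).isClosed l2 l1
    (by rw [← hA, ← hD, hint]; exact w1)
  have l4 : PLog (ufullDrawing emb) _ := l3.mono (by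
    rw [← pl_ud_union]
    apply pl_ud_mono
    intro e he
    by_cases h : e = s(u, v)
    · exact Or.inr (Or.inr h)
    · exact Or.inl ⟨he, h⟩)
  have := pl_notsep (pl_ud_compact emb _) (pl_face_sub emb hF _ hx) (pl_face_sub emb hF' _ hy) l4
  rw [pl_face_eq emb hF hx, pl_face_eq emb hF' hy]
  exact this

theorem pl_pos_tree {T : SimpleGraph V} (hTG : T ≤ G) (hT : T.IsTree) {u v : V} (h : u ≠ v) :
    emb.pos u ∈ udrawing emb T.edgeSet := by
  obtain ⟨q⟩ := hT.1.preconnected u v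
  cases q with
  | nil => exact absurd rfl h
  | cons hh _ => exact (pl_mem_ud emb).2 ⟨_, _, hh, hTG hh, pl_pos_left emb (hTG hh)⟩

theorem pl_two_bdd [Finite V] {T : SimpleGraph V} (hTG : T ≤ G) (hT : T.IsTree) {u v : V}
    (h : G.Adj u v) (hn : ¬ T.Adj u v) {x y : ℝ × ℝ}
    (hx : x ∈ (udrawing emb (T.edgeSet ∪ {s(u, v)}))ᶜ)
    (hy : y ∈ (udrawing emb (T.edgeSet ∪ {s(u, v)}))ᶜ)
    (bx : Bornology.IsBounded (connectedComponentIn (udrawing emb (T.edgeSet ∪ {s(u, v)}))ᶜ x))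
    (bY : Bornology.IsBounded (connectedComponentIn (udrawing emb (T.edgeSet ∪ {s(u, v)}))ᶜ y)) :
    connectedComponentIn (udrawing emb (T.edgeSet ∪ {s(u, v)}))ᶜ x =
      connectedComponentIn (udrawing emb (T.edgeSet ∪ {s(u, v)}))ᶜ y := by
  have hcK := pl_ud_compact emb (T.edgeSet ∪ {s(u, v)})
  have hKe : udrawing emb (T.edgeSet ∪ {s(u, v)}) =
      udrawing emb T.edgeSet ∪ emb.arc u v '' Icc 0 1 := by
    rw [pl_ud_union, pl_ud_single emb h]
  set K := udrawing emb (T.edgeSet ∪ {s(u, v)})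
  have hne : ∀ a ∈ Kᶜ, ∀ z ∈ K, plK z - plK a ≠ 0 := by
    intro a ha z hz h
    exact ha ((plK_inj (sub_eq_zero.1 h)) ▸ hz)
  have hc : ∀ a S, ContinuousOn (fun z => plK z - plK a) S := fun a S =>
    (plK_cont.sub continuous_const).continuousOn
  -- defects
  have key : ∀ a ∈ Kᶜ, ∃ (g k : ℝ × ℝ → ℂ) (m : ℤ), ContinuousOn g (udrawing emb T.edgeSet) ∧
      (∀ z ∈ udrawing emb T.edgeSet, Complex.exp (g z) = plK z - plK a) ∧
      ContinuousOn k (emb.arc u v '' Icc 0 1) ∧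
      (∀ z ∈ emb.arc u v '' Icc 0 1, Complex.exp (k z) = plK z - plK a) ∧
      g (emb.pos u) = k (emb.pos u) ∧
      g (emb.pos v) = k (emb.pos v) + m * (2 * Real.pi * Complex.I) := by
    intro a ha
    have s1 : udrawing emb T.edgeSet ⊆ K := by rw [hKe]; exact subset_union_left
    have s2 : emb.arc u v '' Icc 0 1 ⊆ K := by rw [hKe]; exact subset_union_right
    obtain ⟨g, hg, eg⟩ := pl_tree_log emb hTG hT (hc a _) (fun z hz => hne a ha z (s1 hz))
    obtain ⟨k, hk, ek⟩ := pl_arc_log (emb.arc_cont u v h) (emb.arc_inj u v h) (hc a _)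
      (fun z hz => hne a ha z (s2 hz))
    have hu := pl_pos_tree emb hTG hT h.ne
    have hv := pl_pos_tree emb hTG hT h.ne.symm
    have e1 : Complex.exp (g (emb.pos u) - k (emb.pos u)) = 1 := by
      rw [Complex.exp_sub, eg _ hu, ek _ (pl_pos_left emb h)]
      exact div_self (hne a ha _ (s1 hu))
    have e2 : Complex.exp (g (emb.pos v) - k (emb.pos v)) = 1 := by
      rw [Complex.exp_sub, eg _ hv, ek _ (pl_pos_right emb h)]
      exact div_self (hne a ha _ (s1 hv))
    have e3 : Complex.exp (g (emb.pos v) - (k (emb.pos v) + (g (emb.pos u) - k (emb.pos u)))) = 1 := by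
      rw [← sub_sub, Complex.exp_sub, e1, e2, div_one]
    obtain ⟨m, hm⟩ := Complex.exp_eq_one_iff.1 e3
    refine ⟨g, fun z => k z + (g (emb.pos u) - k (emb.pos u)), m, hg, eg,
      hk.add continuousOn_const, ?_, by ring, ?_⟩
    · intro z hz
      rw [Complex.exp_add, e1, mul_one, ek z hz]
    · linear_combination hm
  obtain ⟨g, k, m, hg, eg, hk, ek, gu, gv⟩ := key x hx
  obtain ⟨g', k', m', hg', eg', hk', ek', gu', gv'⟩ := key y hy
  have glue : ∀ i j : ℤ, i * m + j * m' = 0 →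
      PLog K (fun z => (plK z - plK x) ^ i * (plK z - plK y) ^ j) := by
    intro i j hij
    obtain ⟨l, hl, l1, l2⟩ := pl_glue (pl_ud_compact emb T.edgeSet).isClosed
      (pl_arc_compact emb h).isClosed
      (g := fun z => i * g z + j * g' z) (h := fun z => i * k z + j * k' z)
      ((continuousOn_const.mul hg).add (continuousOn_const.mul hg'))
      ((continuousOn_const.mul hk).add (continuousOn_const.mul hk'))
      (by
        intro z hz hz'
        obtain ⟨a, b, hab, hG, hm⟩ := (pl_mem_ud emb).1 hz
        have hne : s(u, v) ≠ s(a, b) := by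
          intro hh
          rw [← hh] at hab
          exact hn hab
        rcases pl_meet emb h hG hne hz' hm with rfl | rfl
        · simp only [gu, gu']
        · simp only [gv, gv']
          have : (i : ℂ) * m + j * m' = 0 := by exact_mod_cast hij
          linear_combination (2 * Real.pi * Complex.I) * this)
    rw [hKe]
    refine ⟨l, hl, ?_⟩
    rintro z (hz | hz)
    · rw [l1 z hz, Complex.exp_add, Complex.exp_int_mul, Complex.exp_int_mul, eg z hz, eg' z hz]
    · rw [l2 z hz, Complex.exp_add, Complex.exp_int_mul, Complex.exp_int_mul, ek z hz, ek' z hz]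
  by_contra hcon
  have n1 : y ∉ connectedComponentIn Kᶜ x := fun h => hcon (connectedComponentIn_eq h)
  have n2 : x ∉ connectedComponentIn Kᶜ y := fun h => hcon (connectedComponentIn_eq h).symm
  have o1 := pl_obstruct hcK hx hy bx n1 m' (-m) (glue _ _ (by ring))
  have o2 := pl_obstruct hcK hx hy bx n1 1 0
  have o3 := pl_obstruct hcK hy hx bY n2 (-m) m' (by
    have := glue m' (-m) (by ring)
    simpa only [mul_comm] using this)
  have hm : m = 0 := by omega
  exact one_ne_zero (o2 (glue 1 0 (by rw [hm]; ring)))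

theorem pl_three [Finite V] {T : SimpleGraph V} (hTG : T ≤ G) (hT : T.IsTree) {u v : V}
    (h : G.Adj u v) (hn : ¬ T.Adj u v) {x y z : ℝ × ℝ}
    (hx : x ∈ (udrawing emb (T.edgeSet ∪ {s(u, v)}))ᶜ)
    (hy : y ∈ (udrawing emb (T.edgeSet ∪ {s(u, v)}))ᶜ)
    (hz : z ∈ (udrawing emb (T.edgeSet ∪ {s(u, v)}))ᶜ)
    (h1 : connectedComponentIn (udrawing emb (T.edgeSet ∪ {s(u, v)}))ᶜ x ≠
      connectedComponentIn (udrawing emb (T.edgeSet ∪ {s(u, v)}))ᶜ y)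
    (h2 : connectedComponentIn (udrawing emb (T.edgeSet ∪ {s(u, v)}))ᶜ y ≠
      connectedComponentIn (udrawing emb (T.edgeSet ∪ {s(u, v)}))ᶜ z) :
    connectedComponentIn (udrawing emb (T.edgeSet ∪ {s(u, v)}))ᶜ x =
      connectedComponentIn (udrawing emb (T.edgeSet ∪ {s(u, v)}))ᶜ z := by
  have tb := fun {a b} ha hb => pl_two_bdd emb hTG hT h hn (x := a) (y := b) ha hb
  have hcK := pl_ud_compact emb (T.edgeSet ∪ {s(u, v)})
  by_contra h3
  by_cases b1 : Bornology.IsBounded (connectedComponentIn (udrawing emb (T.edgeSet ∪ {s(u, v)}))ᶜ x) <;>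
  by_cases b2 : Bornology.IsBounded (connectedComponentIn (udrawing emb (T.edgeSet ∪ {s(u, v)}))ᶜ y) <;>
  by_cases b3 : Bornology.IsBounded (connectedComponentIn (udrawing emb (T.edgeSet ∪ {s(u, v)}))ᶜ z)
  · exact h1 (tb hx hy b1 b2)
  · exact h1 (tb hx hy b1 b2)
  · exact h3 (tb hx hz b1 b3)
  · exact h2 (pl_unbdd hcK b2 b3)
  · exact h2 (tb hy hz b2 b3)
  · exact h3 (pl_unbdd hcK b1 b3)
  · exact h1 (pl_unbdd hcK b1 b2)
  · exact h1 (pl_unbdd hcK b1 b2)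

end
end

section
open Set Topology Filter

section
variable {V : Type} {G : SimpleGraph V} (emb : UPlaneEmbedding G)

theorem pl_face_unique {F F'} (hF : IsUFace emb F) (hF' : IsUFace emb F') {x} (hx : x ∈ F)
    (hx' : x ∈ F') : F = F' := by
  rw [pl_face_eq emb hF hx, pl_face_eq emb hF' hx']

theorem pl_face_ne {F} (hF : IsUFace emb F) : F.Nonempty := by
  obtain ⟨x, hx, rfl⟩ := hF
  exact ⟨x, mem_connectedComponentIn hx⟩

theorem pl_tree_compl [Finite V] {T : SimpleGraph V} (hTG : T ≤ G) (hT : T.IsTree) :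
    IsPreconnected (udrawing emb T.edgeSet)ᶜ := by
  rcases (udrawing emb T.edgeSet)ᶜ.eq_empty_or_nonempty with h | ⟨x, hx⟩
  · rw [h]; exact isPreconnected_empty
  · have hne : ∀ a ∈ (udrawing emb T.edgeSet)ᶜ, ∀ z ∈ udrawing emb T.edgeSet, plK z - plK a ≠ 0 := by
      intro a ha z hz h
      exact ha ((plK_inj (sub_eq_zero.1 h)) ▸ hz)
    have : (udrawing emb T.edgeSet)ᶜ = connectedComponentIn (udrawing emb T.edgeSet)ᶜ x := by
      refine Subset.antisymm (fun y hy => ?_) (connectedComponentIn_subset _ _)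
      have hl := pl_tree_log emb hTG hT (f := fun z => (plK z - plK x) / (plK z - plK y))
        (((plK_cont.sub continuous_const).continuousOn).div
          ((plK_cont.sub continuous_const).continuousOn) (hne y hy))
        (fun z hz => div_ne_zero (hne x hx z hz) (hne y hy z hz))
      rw [pl_notsep (pl_ud_compact emb _) hx hy hl]
      exact mem_connectedComponentIn hy
    rw [this]; exact isPreconnected_connectedComponentIn

theorem pl_dual [Finite V] (htri : IsTriangulation emb) {T : SimpleGraph V} (hTG : T ≤ G)
    (hT : T.IsTree) (P : Set (ℝ × ℝ) → Prop) {F0} (hF0 : IsUFace emb F0) (h0 : P F0)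
    (hP : ∀ F F', IsUFace emb F → IsUFace emb F' → P F → ∀ u v, G.Adj u v → ¬ T.Adj u v →
      OnFace emb F u → OnFace emb F v → OnFace emb F' u → OnFace emb F' v → P F')
    {F1} (hF1 : IsUFace emb F1) : P F1 := by
  by_contra h1
  let W : (Set (ℝ × ℝ) → Prop) → Set (ℝ × ℝ) := fun Q =>
    {x | ∃ N, IsOpen N ∧ x ∈ N ∧ ∀ F, IsUFace emb F → (F ∩ N).Nonempty → Q F}
  have hW : ∀ Q, IsOpen (W Q) := by
    intro Q
    rw [isOpen_iff_mem_nhds]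
    rintro x ⟨N, hN, hx, h⟩
    exact mem_of_superset (hN.mem_nhds hx) fun y hy => ⟨N, hN, hy, h⟩
  have hface : ∀ Q : Set (ℝ × ℝ) → Prop, ∀ F, IsUFace emb F → Q F → F ⊆ W Q := by
    intro Q F hF hQ x hx
    refine ⟨F, pl_face_open emb hF, hx, ?_⟩
    rintro F' hF' ⟨y, hy, hy'⟩
    rw [pl_face_unique emb hF' hF hy hy']; exact hQ
  have hcov : (udrawing emb T.edgeSet)ᶜ ⊆ W P ∪ W (fun F => ¬ P F) := by
    intro x hx
    by_cases hxf : x ∈ ufullDrawing emb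
    · obtain ⟨u, v, -, huv, hm⟩ := (pl_mem_ud emb).1 hxf
      have hnT : ¬ T.Adj u v := fun h => hx ((pl_mem_ud emb).2 ⟨u, v, h, huv, hm⟩)
      have hxA : x ∈ (udrawing emb (G.edgeSet \ {s(u, v)}))ᶜ := by
        intro hxA
        obtain ⟨a, b, hab, hG, hm'⟩ := (pl_mem_ud emb).1 hxA
        rcases pl_meet emb huv hG (fun hh => hab.2 hh.symm) hm hm' with rfl | rfl
        · exact hx (pl_pos_tree emb hTG hT huv.ne)
        · exact hx (pl_pos_tree emb hTG hT huv.ne.symm)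
      set N := connectedComponentIn (udrawing emb (G.edgeSet \ {s(u, v)}))ᶜ x with hN
      have hNo : IsOpen N := (pl_ud_compact emb _).isClosed.isOpen_compl.connectedComponentIn
      have hxN : x ∈ N := mem_connectedComponentIn hxA
      have hinc : ∀ F, IsUFace emb F → (F ∩ N).Nonempty → OnFace emb F u ∧ OnFace emb F v := by
        intro F hF hFN
        have hpc : IsPreconnected N := isPreconnected_connectedComponentIn
        have hxF : x ∉ F := fun h => pl_face_sub emb hF _ h hxf
        obtain ⟨y, hyN, hyF⟩ : (N ∩ frontier F).Nonempty := by
          by_contra hemp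
          rw [not_nonempty_iff_eq_empty] at hemp
          have hsub : N ⊆ F ∪ (closure F)ᶜ := by
            intro z hz
            by_cases hzF : z ∈ F
            · exact Or.inl hzF
            · refine Or.inr fun hzc => ?_
              have : z ∈ N ∩ frontier F := ⟨hz, by
                rw [(pl_face_open emb hF).frontier_eq]; exact ⟨hzc, hzF⟩⟩
              rw [hemp] at this; exact this
          have hxc : x ∈ (closure F)ᶜ := (hsub hxN).resolve_left hxF
          obtain ⟨z, -, hz1, hz2⟩ := hpc F (closure F)ᶜ (pl_face_open emb hF) isClosed_closure.isOpen_compl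
            hsub (by rwa [inter_comm]) ⟨x, hxN, hxc⟩
          exact hz2 (subset_closure hz1)
        rw [(htri F hF).2.2] at hyF
        obtain ⟨a, b, ⟨a', b', hab, ha, hb, -⟩, hG, hm'⟩ := (pl_mem_ud emb).1 hyF
        have hyA := connectedComponentIn_subset _ _ hyN
        have heq : s(a, b) = s(u, v) := by
          by_contra hne
          exact hyA ((pl_mem_ud emb).2 ⟨a, b, ⟨hG, hne⟩, hG, hm'⟩)
        rw [hab] at heq
        rcases Sym2.eq_iff.1 heq with ⟨rfl, rfl⟩ | ⟨rfl, rfl⟩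
        · exact ⟨ha, hb⟩
        · exact ⟨hb, ha⟩
      by_cases hex : ∃ F, IsUFace emb F ∧ (F ∩ N).Nonempty ∧ P F
      · obtain ⟨F, hF, hFN, hPF⟩ := hex
        refine Or.inl ⟨N, hNo, hxN, fun F' hF' hFN' => ?_⟩
        exact hP F F' hF hF' hPF u v huv hnT (hinc F hF hFN).1 (hinc F hF hFN).2
          (hinc F' hF' hFN').1 (hinc F' hF' hFN').2
      · push Not at hex
        exact Or.inr ⟨N, hNo, hxN, fun F' hF' hFN' => hex F' hF' hFN'⟩
    · obtain ⟨F, hF, hxF⟩ := pl_face_mk emb hxf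
      by_cases hPF : P F
      · exact Or.inl (hface P F hF hPF hxF)
      · exact Or.inr (hface (fun F => ¬ P F) F hF hPF hxF)
  obtain ⟨x0, hx0⟩ := pl_face_ne emb hF0
  obtain ⟨x1, hx1⟩ := pl_face_ne emb hF1
  obtain ⟨x, -, ⟨N, hN, hxN, hh⟩, ⟨N', hN', hxN', hh'⟩⟩ := pl_tree_compl emb hTG hT _ _ (hW P)
    (hW (fun F => ¬ P F)) hcov
    ⟨x0, pl_face_sub emb hF0 _ hx0, hface P F0 hF0 h0 hx0⟩
    ⟨x1, pl_face_sub emb hF1 _ hx1, hface (fun F => ¬ P F) F1 hF1 h1 hx1⟩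
  obtain ⟨y, hy, hyf⟩ := (pl_ud_interior emb G.edgeSet).inter_open_nonempty (N ∩ N') (hN.inter hN')
    ⟨x, hxN, hxN'⟩
  obtain ⟨F, hF, hyF⟩ := pl_face_mk emb hyf
  exact hh' F hF ⟨y, hyF, hy.2⟩ (hh F hF ⟨y, hyF, hy.1⟩)

end
end

section
open Set Topology Filter

section
variable {V : Type} {G : SimpleGraph V} (emb : UPlaneEmbedding G)

theorem pl_cycle {T : SimpleGraph V} (hT : T.IsTree) {u v : V}
    (p : T.Walk u v) (hp : p.IsPath) {a : V}
    (c : (T ⊔ SimpleGraph.fromEdgeSet {s(u, v)}).Walk a a) (hc : c.IsCycle)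
    (hm : s(u, v) ∈ c.edges) : ∀ f ∈ p.edges, f ∈ c.edges := by
  classical
  intro f hf
  by_contra hfc
  have hsub : ∀ e ∈ c.edges,
      e ∈ ((T ⊔ SimpleGraph.fromEdgeSet {s(u, v)}).deleteEdges {f}).edgeSet := by
    intro e he
    rw [SimpleGraph.edgeSet_deleteEdges]
    refine ⟨c.edges_subset_edgeSet he, fun h => hfc ?_⟩
    rw [mem_singleton_iff] at h
    exact h ▸ he
  obtain ⟨-, hr⟩ := SimpleGraph.adj_and_reachable_delete_edges_iff_exists_cycle.2
    ⟨a, c.transfer _ hsub, hc.transfer hsub, by rw [SimpleGraph.Walk.edges_transfer]; exact hm⟩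
  have hle : ((T ⊔ SimpleGraph.fromEdgeSet {s(u, v)}).deleteEdges {f}).deleteEdges {s(u, v)} ≤
      T.deleteEdges {f} := by
    intro x y hxy
    simp only [SimpleGraph.deleteEdges_adj, SimpleGraph.sup_adj, SimpleGraph.fromEdgeSet_adj,
      mem_singleton_iff] at hxy ⊢
    tauto
  obtain ⟨q, hq⟩ := (hr.mono hle).exists_isPath
  have hle2 : T.deleteEdges {f} ≤ T := SimpleGraph.deleteEdges_le _
  have hq2 : (q.mapLe hle2).IsPath := hq.mapLe hle2
  have : p = q.mapLe hle2 := (hT.existsUnique_path u v).unique hp hq2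
  rw [this, SimpleGraph.Walk.edges_mapLe_eq_edges] at hf
  have := q.edges_subset_edgeSet hf
  rw [SimpleGraph.edgeSet_deleteEdges] at this
  exact this.2 rfl

theorem pl_main [Fintype V] (htri : IsTriangulation emb)
    (μ : Set (ℝ × ℝ) → ℝ)
    (hnonneg : ∀ F, IsUFace emb F → 0 ≤ μ F)
    (hsum : ∑ᶠ F ∈ {F | IsUFace emb F}, μ F = 1)
    (hquarter : ∀ F, IsUFace emb F → μ F ≤ 1 / 4)
    (T : SimpleGraph V) (hT : T ≤ G) (hTree : T.IsTree) :
    ∃ u v : V, G.Adj u v ∧ ¬ T.Adj u v ∧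
      ∀ (a : V) (c : (T ⊔ SimpleGraph.fromEdgeSet {s(u, v)}).Walk a a),
        c.IsCycle → s(u, v) ∈ c.edges →
        (∑ᶠ F ∈ {F | IsUFace emb F ∧
            FaceInside (udrawing emb {e | e ∈ c.edges}) F}, μ F) ≤ 3 / 4 ∧
        (∑ᶠ F ∈ {F | IsUFace emb F ∧
            FaceOutside (udrawing emb {e | e ∈ c.edges}) F}, μ F) ≤ 3 / 4 := by
  classical
  let Φ := {F : Set (ℝ × ℝ) // IsUFace emb F}
  let N := {e : Sym2 V // e ∈ G.edgeSet ∧ e ∉ T.edgeSet}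
  have hpt : ∀ F : Φ, ∃ x, x ∈ F.1 := fun F => pl_face_ne emb F.2
  choose pt hpt using hpt
  let inc : N → Φ → Prop := fun e F => ∀ x ∈ e.1, OnFace emb F.1 x
  let K : N → Set (ℝ × ℝ) := fun e => udrawing emb (T.edgeSet ∪ {e.1})
  let R : N → Φ → Φ → Prop := fun e F F' =>
    connectedComponentIn (K e)ᶜ (pt F) = connectedComponentIn (K e)ᶜ (pt F')
  have hR : ∀ e, Equivalence (R e) := fun e =>
    ⟨fun _ => rfl, fun h => h.symm, fun h h' => h.trans h'⟩
  have ha : ∀ e e' X Y, e ≠ e' → inc e' X → inc e' Y → R e X Y := by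
    rintro ⟨e, he⟩ ⟨e', he'⟩ X Y hne hX hY
    induction e' using Sym2.ind with
    | _ u v =>
      refine pl_adj emb htri he'.1 ?_ X.2 Y.2 (hX u (by simp)) (hX v (by simp)) (hY u (by simp))
        (hY v (by simp)) (hpt X) (hpt Y)
      rintro (h | h)
      · exact he'.2 h
      · exact hne (Subtype.ext (mem_singleton_iff.1 h).symm)
  have hb : ∀ e X Y, inc e X → inc e Y → X ≠ Y → ¬ R e X Y := by
    rintro ⟨e, he⟩ X Y hX hY hne hR
    induction e using Sym2.ind with
    | _ u v =>
      obtain ⟨p, -⟩ := (hTree.existsUnique_path u v).exists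
      exact hne (Subtype.ext (pl_sep emb htri (E := T.edgeSet ∪ {s(u, v)}) hT he.1 p
        (fun h => he.2 (p.edges_subset_edgeSet h))
        (fun f hf => Or.inl (p.edges_subset_edgeSet hf)) (Or.inr (mem_singleton _)) X.2 Y.2 (hX u (by simp))
        (hX v (by simp)) (hY u (by simp))
        (hY v (by simp)) (hpt X) (hpt Y) hR))
  have hc : ∀ e X Y Z, ¬ R e X Y → ¬ R e Y Z → R e X Z := by
    rintro ⟨e, he⟩ X Y Z h1 h2
    induction e using Sym2.ind with
    | _ u v =>
      exact pl_three emb hT hTree he.1 he.2 (pl_face_sub emb X.2 _ (hpt X))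
        (pl_face_sub emb Y.2 _ (hpt Y)) (pl_face_sub emb Z.2 _ (hpt Z)) h1 h2
  have hd : ∀ S : Set Φ, S.Nonempty → (∀ X ∈ S, ∀ Y e, inc e X → inc e Y → Y ∈ S) → S = univ := by
    rintro S ⟨X0, hX0⟩ hS
    rw [eq_univ_iff_forall]
    intro X1
    have := pl_dual emb htri hT hTree (fun F => ∃ h : IsUFace emb F, (⟨F, h⟩ : Φ) ∈ S) X0.2
      ⟨X0.2, hX0⟩ (by
        rintro F F' hF hF' ⟨hF2, hFS⟩ u v huv hn h1 h2 h3 h4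
        refine ⟨hF', hS ⟨F, hF⟩ hFS ⟨F', hF'⟩ ⟨s(u, v), huv, hn⟩ ?_ ?_⟩
        · intro x hx
          rcases Sym2.mem_iff.1 hx with rfl | rfl
          · exact h1
          · exact h2
        · intro x hx
          rcases Sym2.mem_iff.1 hx with rfl | rfl
          · exact h3
          · exact h4) X1.2
    exact this.2
  have ht : ∀ X, {e | inc e X}.ncard ≤ 3 := by
    intro X
    obtain ⟨x, y, z, -, -, -, hxyz⟩ := Set.ncard_eq_three.1 (htri X.1 X.2).1
    have hmem : ∀ w, OnFace emb X.1 w → w = x ∨ w = y ∨ w = z := by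
      intro w hw
      have : w ∈ {v : V | OnFace emb X.1 v} := hw
      rw [hxyz] at this
      simpa using this
    have h3 : ({s(x, y), s(x, z), s(y, z)} : Set (Sym2 V)).ncard ≤ 3 := by
      refine (ncard_insert_le _ _).trans ?_
      have := ncard_insert_le s(x, z) {s(y, z)}
      rw [ncard_singleton] at this
      omega
    refine le_trans (ncard_le_ncard_of_injOn (fun e : N => e.1) ?_
      (Subtype.val_injective.injOn) (Set.toFinite _)) h3
    rintro ⟨e, he⟩ hinc
    induction e using Sym2.ind with
    | _ u v =>
      have hne : u ≠ v := G.ne_of_adj he.1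
      have h1 := hmem u (hinc u (by simp))
      have h2 := hmem v (hinc v (by simp))
      simp only [mem_insert_iff, mem_singleton_iff, Sym2.eq_iff]
      rcases h1 with rfl | rfl | rfl <;> rcases h2 with rfl | rfl | rfl <;> simp_all
  have hfin : Finite Φ := pl_fin inc R hb hc hd
  have := Fintype.ofFinite Φ
  obtain ⟨⟨e, he⟩, A, B, hA, hB, hAB, hS⟩ := pl_comb inc R hR ha hb hc hd ht (fun F => μ F.1)
    (fun F => hnonneg F.1 F.2) (by
      rw [← finsum_eq_sum_of_fintype, ← hsum]
      exact finsum_set_coe_eq_finsum_mem {F | IsUFace emb F}) (fun F => hquarter F.1 F.2)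
  have hconv : ∀ Q : Set (ℝ × ℝ) → Prop,
      ∑ᶠ F ∈ {F | IsUFace emb F ∧ Q F}, μ F = ∑ᶠ Y ∈ {Y : Φ | Q Y.1}, μ Y.1 := by
    intro Q
    have : {F | IsUFace emb F ∧ Q F} = Subtype.val '' {Y : Φ | Q Y.1} := by
      ext F
      constructor
      · rintro ⟨h1, h2⟩; exact ⟨⟨F, h1⟩, h2, rfl⟩
      · rintro ⟨Y, hY, rfl⟩; exact ⟨Y.2, hY⟩
    rw [this, finsum_mem_image Subtype.val_injective.injOn]
  induction e using Sym2.ind with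
  | _ u v =>
    refine ⟨u, v, he.1, he.2, ?_⟩
    intro a c hcyc hm
    rw [hconv, hconv]
    obtain ⟨p, hp⟩ := (hTree.existsUnique_path u v).exists
    have hpc := pl_cycle hTree p hp c hcyc hm
    have hcE : {e | e ∈ c.edges} ⊆ T.edgeSet ∪ {s(u, v)} := by
      intro f hf
      have := c.edges_subset_edgeSet hf
      rw [SimpleGraph.edgeSet_sup] at this
      rcases this with h | h
      · exact Or.inl h
      · rw [SimpleGraph.edgeSet_fromEdgeSet] at h
        exact Or.inr h.1
    have hJK : udrawing emb {e | e ∈ c.edges} ⊆ K ⟨s(u, v), he⟩ := pl_ud_mono emb hcE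
    have hJf : udrawing emb {e | e ∈ c.edges} ⊆ ufullDrawing emb := pl_ud_full emb _
    have hJc := pl_ud_compact emb {e | e ∈ c.edges}
    have hsepJ : connectedComponentIn (udrawing emb {e | e ∈ c.edges})ᶜ (pt A) ≠
        connectedComponentIn (udrawing emb {e | e ∈ c.edges})ᶜ (pt B) := by
      intro h
      have := pl_sep emb htri hT he.1 p (fun h => he.2 (p.edges_subset_edgeSet h)) hpc hm A.2 B.2
        (hA u (by simp)) (hA v (by simp)) (hB u (by simp)) (hB v (by simp)) (hpt A) (hpt B) h
      exact hAB (by rw [Subtype.ext this])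
    have hRJ : ∀ X Y, R ⟨s(u, v), he⟩ X Y →
        connectedComponentIn (udrawing emb {e | e ∈ c.edges})ᶜ (pt X) =
        connectedComponentIn (udrawing emb {e | e ∈ c.edges})ᶜ (pt Y) := fun X Y h =>
      pl_comp_mono (compl_subset_compl.2 hJK) (pl_face_sub emb X.2 _ (hpt X))
        (pl_face_sub emb Y.2 _ (hpt Y)) h
    obtain ⟨x, hxf, hx⟩ := pl_exists_far (pl_ud_compact emb G.edgeSet)
    obtain ⟨Xi, hXi, hxX⟩ := pl_face_mk emb hxf
    have hun : ¬ Bornology.IsBounded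
        (connectedComponentIn (udrawing emb {e | e ∈ c.edges})ᶜ (pt ⟨Xi, hXi⟩)) := by
      rw [pl_comp_of_conn (pl_face_conn emb hXi) (pl_face_sub emb hXi _) (hpt ⟨Xi, hXi⟩) hxX]
      exact hx _ hJf
    -- the common argument
    have main : ∀ A B : Φ, ¬ R ⟨s(u, v), he⟩ A B →
        connectedComponentIn (udrawing emb {e | e ∈ c.edges})ᶜ (pt A) ≠
        connectedComponentIn (udrawing emb {e | e ∈ c.edges})ᶜ (pt B) →
        R ⟨s(u, v), he⟩ ⟨Xi, hXi⟩ A →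
        {Y : Φ | FaceInside (udrawing emb {e | e ∈ c.edges}) Y.1} ⊆ {Y | R ⟨s(u, v), he⟩ B Y} ∧
        {Y : Φ | FaceOutside (udrawing emb {e | e ∈ c.edges}) Y.1} ⊆ {Y | R ⟨s(u, v), he⟩ A Y} := by
      intro A B hAB hsepJ hXA
      have unA : ¬ Bornology.IsBounded
        (connectedComponentIn (udrawing emb {e | e ∈ c.edges})ᶜ (pt A)) := by
        rw [← hRJ _ _ hXA]; exact hun
      have bB : Bornology.IsBounded
        (connectedComponentIn (udrawing emb {e | e ∈ c.edges})ᶜ (pt B)) := by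
        by_contra h
        exact hsepJ (pl_unbdd hJc unA h)
      constructor
      · intro Y hY
        by_contra hBY
        have h1 : R ⟨s(u, v), he⟩ A Y := hc _ _ _ _ hAB hBY
        exact unA (by rw [hRJ _ _ h1]; exact hY _ (hpt Y))
      · intro Y hY
        by_contra hAY
        have h1 : R ⟨s(u, v), he⟩ B Y := hc _ _ _ _ (fun h => hAB ((hR _).symm h)) hAY
        exact hY _ (hpt Y) (by rw [← hRJ _ _ h1]; exact bB)
    by_cases hXA : R ⟨s(u, v), he⟩ ⟨Xi, hXi⟩ A
    · obtain ⟨m1, m2⟩ := main A B hAB hsepJ hXA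
      exact ⟨hS _ (Or.inr m1), hS _ (Or.inl m2)⟩
    · obtain ⟨m1, m2⟩ := main B A (fun h => hAB ((hR _).symm h)) hsepJ.symm
        (hc _ _ _ _ hXA hAB)
      exact ⟨hS _ (Or.inl m1), hS _ (Or.inr m2)⟩

end
end

/-- Let `G△` be an `n`-node simple undirected plane
triangulation whose faces carry nonnegative weights `μ` summing to `1` such
that the weight of each face is at most `1/4`, and let `T` be a spanning tree
of `G△`.  Then there exists an edge `e = uv` of `G△` not in `T` such that the
total weight of the faces of `G△` inside the unique simple cycle of
`T ∪ {e}` is at most `3/4` and the total weight of the faces of `G△` outside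
this cycle is at most `3/4`.  (The fundamental cycle is quantified over all
simple cycles of `T ∪ {e}` through `e`, which are unique up to rotation and
reversal.) -/
theorem stmt12 {V : Type} [Fintype V] (G : SimpleGraph V)
    (emb : UPlaneEmbedding G) (htri : IsTriangulation emb)
    (μ : Set (ℝ × ℝ) → ℝ)
    (hnonneg : ∀ F, IsUFace emb F → 0 ≤ μ F)
    (hsum : ∑ᶠ F ∈ {F | IsUFace emb F}, μ F = 1)
    (hquarter : ∀ F, IsUFace emb F → μ F ≤ 1 / 4)
    (T : SimpleGraph V) (hT : T ≤ G) (hTree : T.IsTree) :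
    ∃ u v : V, G.Adj u v ∧ ¬ T.Adj u v ∧
      ∀ (a : V) (c : (T ⊔ SimpleGraph.fromEdgeSet {s(u, v)}).Walk a a),
        c.IsCycle → s(u, v) ∈ c.edges →
        (∑ᶠ F ∈ {F | IsUFace emb F ∧
            FaceInside (udrawing emb {e | e ∈ c.edges}) F}, μ F) ≤ 3 / 4 ∧
        (∑ᶠ F ∈ {F | IsUFace emb F ∧
            FaceOutside (udrawing emb {e | e ∈ c.edges}) F}, μ F) ≤ 3 / 4 := 
  pl_main emb htri μ hnonneg hsum hquarter T hT hTree
end
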